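/- arXiv:2505.18712 — 2 statements merged into one kernel-verified Lean document; each statement's English description precedes it below -/
import Mathlib

section
/- Let A > 13 and δ > 0 be fixed and let h ∈ 𝓗(A,δ). Then for every x with 0 < x < 4π the integral defining H⁺(x) converges absolutely, and there exists a constant C = C(A,h) such that for all x ∈ (0,4π) one has |H⁺(x) − (4/π) Σ_{k=0}^{⌊A⌋−1} (−1)^k (k+1/2) h(−i(k+1/2)) J_{2k+1}(x)| ≤ C·x^{2⌊A⌋}. -/
open MeasureTheory Real Complex

/-- The Bessel function of the first kind `J_ν(x)`, for `x > 0`, defined via its power series,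
where `(x/2)^w := exp (w * log (x/2))` with the real logarithm. -/
noncomputable def besselJ (ν : ℂ) (x : ℝ) : ℂ :=
  ∑' m : ℕ, ((-1) ^ m / ((Nat.factorial m : ℂ) * Complex.Gamma (m + ν + 1))) *
    Complex.exp ((2 * m + ν) * Real.log (x / 2))

/-- The integral transform `H⁺(x) = (2i/π) ∫_ℝ h(t) J_{2it}(x) t / cosh(πt) dt`. -/
noncomputable def Hplus (h : ℝ → ℝ) (x : ℝ) : ℂ :=
  (2 * Complex.I / (π : ℂ)) *
    ∫ t : ℝ, (h t : ℂ) * besselJ (2 * Complex.I * t) x * ((t : ℂ) / (Real.cosh (π * t) : ℂ))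

/-- `h : ℝ → ℝ` belongs to the class `𝓗(A, δ)`, witnessed by the holomorphic extension
`H : ℂ → ℂ` to the strip `{s : |Im s| ≤ A}`. -/
structure IsInHClass (A δ : ℝ) (h : ℝ → ℝ) (H : ℂ → ℂ) : Prop where
  nonneg : ∀ t : ℝ, 0 ≤ h t
  even : ∀ t : ℝ, h (-t) = h t
  not_zero : ∃ t : ℝ, h t ≠ 0
  extends_h : ∀ t : ℝ, H (t : ℂ) = (h t : ℂ)
  even_ext : ∀ s : ℂ, H (-s) = H s
  holo : DifferentiableOn ℂ H {s : ℂ | |s.im| ≤ A}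
  bound : ∃ C : ℝ, ∀ s : ℂ, |s.im| ≤ A → ‖H s‖ ≤ C * (1 + ‖s‖) ^ (-(2 + δ))


lemma gamma_ge_half_of_one_le {s : ℝ} (hs : 1 ≤ s) : 1 / 2 ≤ Real.Gamma s := by
  rcases le_total 2 s with h2 | h2
  · have := Real.Gamma_strictMonoOn_Ici.monotoneOn (Set.mem_Ici.2 le_rfl) (Set.mem_Ici.2 h2) h2
    rw [Real.Gamma_two] at this
    linarith
  · have h3 : (2 : ℝ) ≤ s + 1 := by linarith
    have := Real.Gamma_strictMonoOn_Ici.monotoneOn (Set.mem_Ici.2 le_rfl) (Set.mem_Ici.2 h3) h3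
    rw [Real.Gamma_two, Real.Gamma_add_one (by linarith)] at this
    have hp := Real.Gamma_pos_of_pos (show 0 < s by linarith)
    nlinarith

lemma gamma_ge_half {s : ℝ} (hs : 1 / 2 ≤ s) : 1 / 2 ≤ Real.Gamma s := by
  rcases le_total 1 s with h2 | h2
  · exact gamma_ge_half_of_one_le h2
  · have := gamma_ge_half_of_one_le (show 1 ≤ s + 1 by linarith)
    rw [Real.Gamma_add_one (by linarith)] at this
    have hp := Real.Gamma_pos_of_pos (show 0 < s by linarith)
    nlinarith

lemma gamma_half_norm_sq (y : ℝ) :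
    ‖Complex.Gamma (1 / 2 + y * Complex.I)‖ ^ 2 = π / Real.cosh (π * y) := by
  have h1 := Complex.Gamma_mul_Gamma_one_sub (1 / 2 + y * Complex.I)
  have h2 : (1 : ℂ) - (1 / 2 + y * Complex.I) = (starRingEnd ℂ) (1 / 2 + y * Complex.I) := by
    apply Complex.ext <;> simp <;> norm_num
  have h3 : Complex.sin (π * (1 / 2 + y * Complex.I)) = ((Real.cosh (π * y) : ℝ) : ℂ) := by
    rw [show (π : ℂ) * (1 / 2 + y * Complex.I) = (π * y : ℂ) * Complex.I + π / 2 by ring,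
      Complex.sin_add_pi_div_two, Complex.cos_mul_I]
    push_cast; rfl
  rw [h2, Complex.Gamma_conj, Complex.mul_conj, h3, Complex.normSq_eq_norm_sq] at h1
  exact_mod_cast h1

lemma gammaSeq_norm (s : ℂ) (n : ℕ) (hn : 0 < n) :
    ‖Complex.GammaSeq s n‖ =
      (n : ℝ) ^ s.re * (n.factorial : ℝ) / ∏ j ∈ Finset.range (n + 1), ‖s + j‖ := by
  unfold Complex.GammaSeq
  rw [norm_div, norm_mul, Complex.norm_natCast_cpow_of_pos hn, norm_prod]
  simp

lemma gamma_compare {x : ℝ} (hx : 1 / 2 ≤ x) (y : ℝ) :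
    ‖Complex.Gamma (x : ℂ)‖ * ‖Complex.Gamma (1 / 2 + y * Complex.I)‖ ≤
      ‖Complex.Gamma (x + y * Complex.I)‖ * ‖Complex.Gamma (1 / 2 : ℂ)‖ := by
  refine le_of_tendsto_of_tendsto
    ((Complex.GammaSeq_tendsto_Gamma _).norm.mul (Complex.GammaSeq_tendsto_Gamma _).norm)
    ((Complex.GammaSeq_tendsto_Gamma _).norm.mul (Complex.GammaSeq_tendsto_Gamma _).norm) ?_
  filter_upwards [Filter.eventually_gt_atTop 0] with n hn
  simp only [gammaSeq_norm _ n hn]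
  have e1 : ((1 / 2 : ℂ) + y * Complex.I).re = (1 / 2 : ℂ).re := by simp
  have e2 : ((x : ℂ) + y * Complex.I).re = (x : ℂ).re := by simp
  rw [e1, e2, div_mul_div_comm, div_mul_div_comm, ← Finset.prod_mul_distrib,
    ← Finset.prod_mul_distrib]
  have pos : ∀ s : ℂ, 0 < s.re → ∀ j : ℕ, 0 < ‖s + j‖ := by
    intro s hs j
    rw [norm_pos_iff]
    intro h0
    have := congrArg Complex.re h0
    simp at this
    have hj : (0 : ℝ) ≤ j := Nat.cast_nonneg j
    linarith
  refine div_le_div_of_nonneg_left (by positivity) ?_ ?_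
  · refine Finset.prod_pos fun j _ => mul_pos (pos _ ?_ j) (pos _ ?_ j)
    · simp; linarith
    · simp
  · refine Finset.prod_le_prod (fun j _ => by positivity) fun j _ => ?_
    have hj : (0 : ℝ) ≤ j := Nat.cast_nonneg j
    have n1 : ‖(x : ℂ) + y * Complex.I + j‖ ^ 2 = (x + j) ^ 2 + y ^ 2 := by
      rw [← Complex.normSq_eq_norm_sq, Complex.normSq_apply]; simp; ring
    have n2 : ‖(1 / 2 : ℂ) + y * Complex.I + j‖ ^ 2 = (1 / 2 + j) ^ 2 + y ^ 2 := by
      rw [← Complex.normSq_eq_norm_sq, Complex.normSq_apply]; simp; ring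
    have n3 : ‖(x : ℂ) + j‖ ^ 2 = (x + j) ^ 2 := by
      rw [← Complex.normSq_eq_norm_sq, Complex.normSq_apply]; simp; ring
    have n4 : ‖(1 / 2 : ℂ) + j‖ ^ 2 = (1 / 2 + j) ^ 2 := by
      rw [← Complex.normSq_eq_norm_sq, Complex.normSq_apply]; simp; ring
    refine (sq_le_sq₀ (by positivity) (by positivity)).1 ?_
    rw [mul_pow, mul_pow, n1, n2, n3, n4]
    have : (1 / 2 + (j : ℝ)) ^ 2 ≤ (x + j) ^ 2 := by gcongr
    nlinarith [mul_le_mul_of_nonneg_right this (sq_nonneg y)]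

lemma inv_gamma_bound {z : ℂ} (hz : 1 / 2 ≤ z.re) :
    ‖(Complex.Gamma z)⁻¹‖ ≤ 2 * √(Real.cosh (π * z.im)) := by
  have h1 := gamma_compare hz z.im
  rw [Complex.re_add_im] at h1
  have h2 := gamma_half_norm_sq z.im
  have h3 := gamma_half_norm_sq 0
  simp only [Complex.ofReal_zero, zero_mul, add_zero, mul_zero, Real.cosh_zero, div_one] at h3
  have h4 := gamma_ge_half hz
  rw [Complex.Gamma_ofReal, Complex.norm_real, Real.norm_of_nonneg (by linarith)] at h1
  have hc : 0 < Real.cosh (π * z.im) := Real.cosh_pos _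
  have hg : 0 < ‖Complex.Gamma z‖ := by
    rw [norm_pos_iff]; exact Complex.Gamma_ne_zero_of_re_pos (by linarith)
  rw [norm_inv, inv_le_iff_one_le_mul₀ hg]
  refine (sq_le_sq₀ (by positivity) (by positivity)).1 ?_
  have h5 : 1 / 2 * ‖Complex.Gamma (1 / 2 + z.im * Complex.I)‖ ≤
      ‖Complex.Gamma z‖ * ‖Complex.Gamma (1 / 2 : ℂ)‖ :=
    le_trans (by gcongr) h1
  have h6 := pow_le_pow_left₀ (by positivity) h5 2
  rw [mul_pow, mul_pow, h2, h3] at h6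
  rw [mul_pow, mul_pow, Real.sq_sqrt hc.le]
  have hp := Real.pi_pos
  have : (1 / 2) ^ 2 * (1 / Real.cosh (π * z.im)) ≤ ‖Complex.Gamma z‖ ^ 2 := by
    refine le_of_mul_le_mul_right ?_ hp
    calc _ = (1 / 2) ^ 2 * (π / Real.cosh (π * z.im)) := by ring
      _ ≤ _ := h6
  rw [← mul_div_assoc, div_le_iff₀ hc] at this
  nlinarith

lemma bessel_term_bound {x : ℝ} (hx : 0 < x) {ν : ℂ} (hν : -(1 / 2) ≤ ν.re) (m : ℕ) :
    ‖((-1) ^ m / ((Nat.factorial m : ℂ) * Complex.Gamma (m + ν + 1))) *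
      Complex.exp ((2 * m + ν) * Real.log (x / 2))‖ ≤
    (2 * √(Real.cosh (π * ν.im)) * Real.exp (ν.re * Real.log (x / 2))) *
      (((x / 2) ^ 2) ^ m / (Nat.factorial m)) := by
  have hm : (0 : ℝ) ≤ m := Nat.cast_nonneg m
  have h1 := inv_gamma_bound (z := m + ν + 1) (by simp; linarith)
  have e1 : ((m : ℂ) + ν + 1).im = ν.im := by simp
  rw [e1] at h1
  have e2 : ‖Complex.exp ((2 * m + ν) * Real.log (x / 2))‖ =
      Real.exp (ν.re * Real.log (x / 2)) * ((x / 2) ^ 2) ^ m := by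
    rw [Complex.norm_exp, Complex.re_mul_ofReal]
    have : (2 * (m : ℂ) + ν).re = (2 * m : ℕ) + ν.re := by simp
    rw [this, add_mul, Real.exp_add, Real.exp_nat_mul, Real.exp_log (by positivity), pow_mul]
    ring
  have e3 : ‖(-1 : ℂ) ^ m / ((Nat.factorial m : ℂ) * Complex.Gamma (m + ν + 1))‖ =
      ‖(Complex.Gamma (m + ν + 1))⁻¹‖ / (Nat.factorial m) := by
    rw [norm_div, norm_mul, norm_inv]; simp; ring
  rw [norm_mul, e2, e3]
  calc _ = ‖(Complex.Gamma (m + ν + 1))⁻¹‖ * (Real.exp (ν.re * Real.log (x / 2)) *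
        ((x / 2) ^ 2) ^ m / (Nat.factorial m)) := by ring
    _ ≤ _ := by
      refine (mul_le_mul_of_nonneg_right h1 (by positivity)).trans (le_of_eq (by ring))

lemma bessel_bound {x : ℝ} (hx : 0 < x) {ν : ℂ} (hν : -(1 / 2) ≤ ν.re) :
    ‖besselJ ν x‖ ≤ (2 * √(Real.cosh (π * ν.im)) * Real.exp (ν.re * Real.log (x / 2))) *
      Real.exp ((x / 2) ^ 2) := by
  refine tsum_of_norm_bounded ?_ (bessel_term_bound hx hν)
  have := NormedSpace.expSeries_div_hasSum_exp ((x / 2) ^ 2 : ℝ)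
  rw [← Real.exp_eq_exp_ℝ] at this
  exact this.mul_left _

lemma bessel_differentiableAt {x : ℝ} (hx : 0 < x) {ν : ℂ} (hν : -(1 / 2) < ν.re) :
    DifferentiableAt ℂ (fun ν => besselJ ν x) ν := by
  set R : ℝ := ‖ν‖ + 1
  let U : Set ℂ := {w | -(1 / 2) < w.re} ∩ Metric.ball 0 R
  have hU : IsOpen U := (isOpen_lt continuous_const Complex.continuous_re).inter Metric.isOpen_ball
  have hmem : ν ∈ U := ⟨hν, by simp [R]⟩
  have hs : Summable fun m : ℕ =>
      (2 * √(Real.cosh (π * R)) * Real.exp (R * |Real.log (x / 2)|)) *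
      (((x / 2) ^ 2) ^ m / (Nat.factorial m)) :=
    (Real.summable_pow_div_factorial _).mul_left _
  have hd : DifferentiableOn ℂ (fun ν => besselJ ν x) U := by
    refine differentiableOn_tsum_of_summable_norm hs (fun m => ?_) hU (fun m w hw => ?_)
    · have hg : Differentiable ℂ fun w : ℂ => (Complex.Gamma (m + w + 1))⁻¹ :=
        Complex.differentiable_one_div_Gamma.comp
          (((differentiable_const _).add differentiable_id).add_const _)
      have : (fun w : ℂ => ((-1) ^ m / ((Nat.factorial m : ℂ) * Complex.Gamma (m + w + 1))) *
          Complex.exp ((2 * m + w) * Real.log (x / 2))) = fun w : ℂ =>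
          ((-1) ^ m / (Nat.factorial m : ℂ)) * (Complex.Gamma (m + w + 1))⁻¹ *
          Complex.exp ((2 * m + w) * Real.log (x / 2)) := by
        funext w; rw [div_mul_eq_div_div, div_eq_mul_inv ((-1) ^ m / (Nat.factorial m : ℂ))]
      rw [this]
      exact ((hg.const_mul _).mul (by fun_prop)).differentiableOn
    · refine (bessel_term_bound hx hw.1.le m).trans ?_
      have hw2 : ‖w‖ ≤ R := (mem_ball_zero_iff.1 hw.2).le
      have h1 : |w.im| ≤ |R| := ((Complex.abs_im_le_norm w).trans hw2).trans (le_abs_self _)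
      have h2 : Real.cosh (π * w.im) ≤ Real.cosh (π * R) := by
        rw [Real.cosh_le_cosh, abs_mul, abs_mul]; gcongr
      have h3 : w.re * Real.log (x / 2) ≤ R * |Real.log (x / 2)| := by
        refine (le_abs_self _).trans ?_
        rw [abs_mul]
        gcongr
        exact (Complex.abs_re_le_norm w).trans hw2
      gcongr
  exact hd.differentiableAt (hU.mem_nhds hmem)

lemma line_shift (g : ℂ → ℂ) (a b : ℝ) (p : ℂ) (φ : ℝ → ℝ)
    (hc : ContinuousOn g {s : ℂ | s.im ∈ Set.uIcc a b})
    (hd : ∀ s : ℂ, s.im ∈ Set.Ioo (min a b) (max a b) → s ≠ p → DifferentiableAt ℂ g s)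
    (hφ : Filter.Tendsto φ Filter.atTop (nhds 0))
    (hb : ∀ t y : ℝ, 1 ≤ |t| → y ∈ Set.uIcc a b → ‖g (t + y * Complex.I)‖ ≤ φ |t|)
    (ia : Integrable fun t : ℝ => g (t + a * Complex.I))
    (ib : Integrable fun t : ℝ => g (t + b * Complex.I)) :
    ∫ t : ℝ, g (t + a * Complex.I) = ∫ t : ℝ, g (t + b * Complex.I) := by
  have key : ∀ T : ℝ, (∫ t in (-T)..T, g (t + a * Complex.I)) -
      (∫ t in (-T)..T, g (t + b * Complex.I)) =
      Complex.I * (∫ y in a..b, g ((-T : ℝ) + y * Complex.I)) -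
      Complex.I * (∫ y in a..b, g (T + y * Complex.I)) := by
    intro T
    have := Complex.integral_boundary_rect_eq_zero_of_differentiable_on_off_countable g
      ⟨-T, a⟩ ⟨T, b⟩ {p} (Set.countable_singleton p)
      (hc.mono fun s hs => hs.2) (fun s hs => hd s hs.1.2 hs.2)
    simp only [smul_eq_mul] at this
    linear_combination this
  have t1 := (intervalIntegral_tendsto_integral ia Filter.tendsto_neg_atTop_atBot
    Filter.tendsto_id).sub (intervalIntegral_tendsto_integral ib
      Filter.tendsto_neg_atTop_atBot Filter.tendsto_id)
  have t2 : Filter.Tendsto (fun T : ℝ => (∫ t in (-T)..T, g (t + a * Complex.I)) -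
      (∫ t in (-T)..T, g (t + b * Complex.I))) Filter.atTop (nhds 0) := by
    have h0 : Filter.Tendsto (fun T : ℝ => φ T * |b - a| + φ T * |b - a|) Filter.atTop (nhds 0) := by
      simpa using (hφ.mul_const |b - a|).add (hφ.mul_const |b - a|)
    refine squeeze_zero_norm' ?_ h0
    filter_upwards [Filter.eventually_ge_atTop 1] with T hT
    have hT' : |T| = T := abs_of_nonneg (by linarith)
    rw [key T]
    refine (norm_sub_le _ _).trans (add_le_add ?_ ?_)
    · rw [norm_mul, Complex.norm_I, one_mul]
      refine intervalIntegral.norm_integral_le_of_norm_le_const fun y hy => ?_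
      have := hb (-T) y (by rw [abs_neg, hT']; exact hT) (Set.uIoc_subset_uIcc hy)
      rwa [abs_neg, hT'] at this
    · rw [norm_mul, Complex.norm_I, one_mul]
      refine intervalIntegral.norm_integral_le_of_norm_le_const fun y hy => ?_
      have := hb T y (by rw [hT']; exact hT) (Set.uIoc_subset_uIcc hy)
      rwa [hT'] at this
  exact sub_eq_zero.1 (tendsto_nhds_unique t1 t2)

lemma one_add_sq_le_cosh (t : ℝ) : 1 + t ^ 2 ≤ Real.cosh (π * t) := by
  have hs : ∀ v : ℝ, v ^ 2 ≤ Real.sinh v ^ 2 := by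
    intro v
    rw [sq_le_sq, Real.abs_sinh]
    exact Real.self_le_sinh_iff.2 (abs_nonneg v)
  have h1 : Real.cosh (π * t) = 1 + 2 * Real.sinh (π * t / 2) ^ 2 := by
    have := Real.cosh_two_mul (π * t / 2)
    rw [Real.cosh_sq, show 2 * (π * t / 2) = π * t by ring] at this
    linarith
  have h2 := hs (π * t / 2)
  have h3 : (3 : ℝ) ^ 2 ≤ π ^ 2 := by gcongr; exact Real.pi_gt_three.le
  nlinarith [mul_le_mul_of_nonneg_right h3 (sq_nonneg t)]

lemma integrable_inv_cosh : Integrable fun t : ℝ => (Real.cosh (π * t))⁻¹ := by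
  refine integrable_inv_one_add_sq.mono' ?_ (Filter.Eventually.of_forall fun t => ?_)
  · refine Continuous.aestronglyMeasurable ?_
    exact (Real.continuous_cosh.comp (continuous_const.mul continuous_id)).inv₀
      fun t => (Real.cosh_pos _).ne'
  · rw [Real.norm_of_nonneg (inv_nonneg.2 (Real.cosh_pos _).le)]
    exact inv_anti₀ (by positivity) (one_add_sq_le_cosh t)

lemma integral_inv_cosh : ∫ t : ℝ, (Real.cosh (π * t))⁻¹ = 1 := by
  have hd : ∀ t : ℝ, HasDerivAt (fun t : ℝ => 2 / π * Real.arctan (Real.exp (π * t)))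
      ((Real.cosh (π * t))⁻¹) t := by
    intro t
    have h1 : HasDerivAt (fun t : ℝ => Real.exp (π * t)) (Real.exp (π * t) * (π * 1)) t :=
      ((hasDerivAt_id t).const_mul π).exp
    refine (h1.arctan.const_mul (2 / π)).congr_deriv ?_
    have hp := Real.pi_pos
    have he := Real.exp_pos (π * t)
    rw [Real.cosh_eq, Real.exp_neg]
    field_simp
    ring
  have hp := Real.pi_pos
  have hbot : Filter.Tendsto (fun t : ℝ => 2 / π * Real.arctan (Real.exp (π * t)))
      Filter.atBot (nhds (2 / π * Real.arctan 0)) := by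
    refine (Real.continuous_arctan.continuousAt.tendsto.comp ?_).const_mul _
    exact Real.tendsto_exp_atBot.comp (Filter.tendsto_id.const_mul_atBot hp)
  have htop : Filter.Tendsto (fun t : ℝ => 2 / π * Real.arctan (Real.exp (π * t)))
      Filter.atTop (nhds (2 / π * (π / 2))) := by
    refine Filter.Tendsto.const_mul _ ?_
    have := Real.tendsto_arctan_atTop.mono_right nhdsWithin_le_nhds
    exact this.comp (Real.tendsto_exp_atTop.comp (Filter.tendsto_id.const_mul_atTop hp))
  rw [integral_of_hasDerivAt_of_tendsto hd integrable_inv_cosh hbot htop, Real.arctan_zero]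
  field_simp
  ring

lemma cosh_norm_sq (t y : ℝ) : ‖Complex.cosh (π * (t + y * Complex.I))‖ ^ 2 =
    Real.sinh (π * t) ^ 2 + Real.cos (π * y) ^ 2 := by
  have : Complex.cosh (π * (t + y * Complex.I)) =
      (Real.cosh (π * t) * Real.cos (π * y) : ℝ) +
      (Real.sinh (π * t) * Real.sin (π * y) : ℝ) * Complex.I := by
    rw [show (π : ℂ) * (t + y * Complex.I) = (π * t : ℂ) + (π * y : ℂ) * Complex.I by ring,
      Complex.cosh_add, Complex.cosh_mul_I, Complex.sinh_mul_I]
    push_cast; ring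
  rw [this, ← Complex.normSq_eq_norm_sq, Complex.normSq_add_mul_I, mul_pow, mul_pow,
    Real.cosh_sq, Real.sin_sq]
  ring

lemma cosh_norm_ge {t : ℝ} (ht : 1 ≤ |t|) (y : ℝ) :
    Real.cosh (π * t) / 2 ≤ ‖Complex.cosh (π * (t + y * Complex.I))‖ := by
  have h := cosh_norm_sq t y
  have hc := Real.cosh_pos (π * t)
  have h1 : (1 : ℝ) ≤ Real.sinh (π * t) ^ 2 := by
    have h2 : |π * t| ≤ Real.sinh |π * t| := Real.self_le_sinh_iff.2 (abs_nonneg _)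
    rw [← Real.abs_sinh, abs_mul, abs_of_pos Real.pi_pos] at h2
    have h3 : 1 ≤ |Real.sinh (π * t)| := by nlinarith [Real.pi_gt_three]
    rw [← sq_abs]; nlinarith
  refine (sq_le_sq₀ (by positivity) (by positivity)).1 ?_
  rw [h, div_pow, Real.cosh_sq]
  nlinarith [sq_nonneg (Real.cos (π * y))]

lemma cosh_neg_nat (t : ℝ) (k : ℕ) :
    Complex.cosh (π * (t + ((-(k : ℝ) : ℝ) : ℂ) * Complex.I)) =
      (-1) ^ k * (Real.cosh (π * t) : ℂ) := by
  rw [show (π : ℂ) * (t + ((-(k : ℝ) : ℝ) : ℂ) * Complex.I) =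
      (π * t : ℂ) - ((k * π : ℂ)) * Complex.I by push_cast; ring,
      Complex.cosh_sub, Complex.cosh_mul_I, Complex.sinh_mul_I, Complex.sin_nat_mul_pi]
  have : Complex.cos (k * π) = (-1) ^ k := by
    have := Real.cos_nat_mul_pi k
    exact_mod_cast congrArg (fun r : ℝ => (r : ℂ)) this
  rw [this]; push_cast; ring

lemma cosh_ne_zero_of_strip (k : ℕ) {s : ℂ} (h1 : -((k : ℝ) + 1) ≤ s.im) (h2 : s.im ≤ -(k : ℝ))
    (hs : s ≠ -Complex.I * ((k : ℂ) + 1 / 2)) : Complex.cosh (π * s) ≠ 0 := by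
  intro h0
  have h := cosh_norm_sq s.re s.im
  rw [Complex.re_add_im, h0] at h
  simp only [norm_zero] at h
  have h3 : Real.sinh (π * s.re) = 0 := by
    nlinarith [sq_nonneg (Real.sinh (π * s.re)), sq_nonneg (Real.cos (π * s.im))]
  have h4 : Real.cos (π * s.im) = 0 := by
    nlinarith [sq_nonneg (Real.sinh (π * s.re)), sq_nonneg (Real.cos (π * s.im))]
  rw [Real.sinh_eq_zero] at h3
  obtain ⟨n, hn⟩ := Real.cos_eq_zero_iff.1 h4
  have hp := Real.pi_pos
  have h5 : s.im = n + 1 / 2 := by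
    have : π * s.im = π * (n + 1 / 2) := by rw [hn]; ring
    exact mul_left_cancel₀ hp.ne' this
  have h6 : s.re = 0 := by
    rcases mul_eq_zero.1 h3 with h | h
    · exact absurd h hp.ne'
    · exact h
  have h7 : n = -((k : ℤ) + 1) := by
    rw [h5] at h1 h2
    have a1 : -((k : ℝ) + 1) - 1 < n := by linarith
    have a2 : (n : ℝ) < -(k : ℝ) := by linarith
    have a1' : -((k : ℤ) + 1) - 1 < n := by exact_mod_cast a1
    have a2' : n < -(k : ℤ) := by exact_mod_cast a2
    omega
  apply hs
  rw [h7] at h5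
  push_cast at h5
  apply Complex.ext
  · simp [h6]
  · simp [h5]; ring

lemma line_integrable (k : ℕ) (G : ℂ → ℂ) (M δ : ℝ) (hδ : 0 < δ)
    (hc : Continuous fun t : ℝ => G (t + ((-(k : ℝ) : ℝ) : ℂ) * Complex.I))
    (hb : ∀ t : ℝ, ‖G (t + ((-(k : ℝ) : ℝ) : ℂ) * Complex.I)‖ ≤
      M * (1 + |t|) ^ (-(1 + δ)) * Real.cosh (π * t)) :
    Integrable (fun t : ℝ => G (t + ((-(k : ℝ) : ℝ) : ℂ) * Complex.I) /
      Complex.cosh (π * (t + ((-(k : ℝ) : ℝ) : ℂ) * Complex.I))) ∧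
    ‖∫ t : ℝ, G (t + ((-(k : ℝ) : ℝ) : ℂ) * Complex.I) /
      Complex.cosh (π * (t + ((-(k : ℝ) : ℝ) : ℂ) * Complex.I))‖ ≤
      M * ∫ t : ℝ, (1 + |t|) ^ (-(1 + δ)) := by
  have hi : Integrable fun t : ℝ => (1 + |t|) ^ (-(1 + δ)) := by
    have := integrable_one_add_norm (E := ℝ) (μ := volume) (r := 1 + δ) (by simp [hδ])
    simpa [Real.norm_eq_abs] using this
  have hbd : ∀ t : ℝ, ‖G (t + ((-(k : ℝ) : ℝ) : ℂ) * Complex.I) /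
      Complex.cosh (π * (t + ((-(k : ℝ) : ℝ) : ℂ) * Complex.I))‖ ≤
      M * (1 + |t|) ^ (-(1 + δ)) := by
    intro t
    rw [cosh_neg_nat, norm_div, norm_mul, norm_pow, norm_neg, norm_one, one_pow, one_mul,
      Complex.norm_real, Real.norm_of_nonneg (Real.cosh_pos _).le, div_le_iff₀ (Real.cosh_pos _)]
    exact hb t
  refine ⟨(hi.const_mul M).mono' ?_ (Filter.Eventually.of_forall hbd), ?_⟩
  · refine (Continuous.div hc (by fun_prop) fun t => ?_).aestronglyMeasurable
    rw [cosh_neg_nat]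
    refine mul_ne_zero (by simp) ?_
    exact_mod_cast (Real.cosh_pos _).ne'
  · rw [← integral_const_mul]
    exact norm_integral_le_of_norm_le (hi.const_mul M) (Filter.Eventually.of_forall hbd)

lemma pole_step (k : ℕ) (G : ℂ → ℂ) (M δ : ℝ) (hδ : 0 < δ)
    (hc : ContinuousOn G {s : ℂ | -((k : ℝ) + 1) ≤ s.im ∧ s.im ≤ -(k : ℝ)})
    (hd : ∀ s : ℂ, -((k : ℝ) + 1) < s.im → s.im < -(k : ℝ) → DifferentiableAt ℂ G s)
    (hb : ∀ s : ℂ, -((k : ℝ) + 1) ≤ s.im → s.im ≤ -(k : ℝ) →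
      ‖G s‖ ≤ M * (1 + |s.re|) ^ (-(1 + δ)) * Real.cosh (π * s.re)) :
    (∫ t : ℝ, G (t + ((-(k : ℝ) : ℝ) : ℂ) * Complex.I) /
      Complex.cosh (π * (t + ((-(k : ℝ) : ℝ) : ℂ) * Complex.I))) =
    2 * ((-1) ^ k * G (-Complex.I * ((k : ℂ) + 1 / 2))) +
    ∫ t : ℝ, G (t + ((-((k + 1 : ℕ) : ℝ) : ℝ) : ℂ) * Complex.I) /
      Complex.cosh (π * (t + ((-((k + 1 : ℕ) : ℝ) : ℝ) : ℂ) * Complex.I)) := by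
  set p : ℂ := -Complex.I * ((k : ℂ) + 1 / 2) with hp
  let S : Set ℂ := {s : ℂ | -((k : ℝ) + 1) ≤ s.im ∧ s.im ≤ -(k : ℝ)}
  let Cf : ℂ → ℂ := fun s => Complex.cosh (π * s)
  have hCd : Differentiable ℂ Cf := by
    intro s; exact (Complex.differentiable_cosh _).comp s (by fun_prop)
  have pre : p.re = 0 := by simp [hp]
  have pim : p.im = -((k : ℝ) + 1 / 2) := by simp [hp]
  have hSp : S ∈ nhds p := by
    have ho : IsOpen {s : ℂ | -((k : ℝ) + 1) < s.im ∧ s.im < -(k : ℝ)} :=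
      (isOpen_lt continuous_const Complex.continuous_im).inter
        (isOpen_lt Complex.continuous_im continuous_const)
    refine Filter.mem_of_superset (ho.mem_nhds ?_) fun s hs => ⟨hs.1.le, hs.2.le⟩
    constructor <;> rw [pim] <;> linarith
  have hCp : Cf p = 0 := by
    have h := cosh_norm_sq p.re p.im
    rw [Complex.re_add_im, pre, pim] at h
    have h2 : Real.cos (π * -((k : ℝ) + 1 / 2)) = 0 := by
      rw [Real.cos_eq_zero_iff]
      exact ⟨-((k : ℤ) + 1), by push_cast; ring⟩
    rw [h2] at h
    simpa using h
  have hCp' : deriv Cf p ≠ 0 := by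
    have h1 : HasDerivAt Cf (Complex.sinh (π * p) * (π * 1)) p :=
      HasDerivAt.ccosh ((hasDerivAt_id p).const_mul (π : ℂ))
    rw [h1.deriv]
    refine mul_ne_zero ?_ (by simp [Real.pi_ne_zero])
    intro h0
    have := Complex.cosh_sq_sub_sinh_sq (π * p)
    have hCp2 : Complex.cosh (π * p) = 0 := hCp
    rw [h0, hCp2] at this
    norm_num at this
  let g : ℂ → ℂ := fun s => dslope G p s / dslope Cf p s
  have hGp : DifferentiableAt ℂ G p := hd p (by rw [pim]; linarith) (by rw [pim]; linarith)
  have hden : ∀ s ∈ S, dslope Cf p s ≠ 0 := by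
    intro s hs
    rcases eq_or_ne s p with h | h
    · rw [h, dslope_same]; exact hCp'
    · rw [dslope_of_ne _ h, slope_def_module, hCp, sub_zero, smul_eq_mul]
      exact mul_ne_zero (inv_ne_zero (sub_ne_zero.2 h)) (cosh_ne_zero_of_strip k hs.1 hs.2 h)
  have hg : ∀ s, s ≠ p → g s = G s / Cf s - G p * (Cf s)⁻¹ := by
    intro s h
    simp only [g]
    rw [dslope_of_ne _ h, dslope_of_ne _ h, slope_def_module, slope_def_module, hCp, sub_zero,
      smul_eq_mul, smul_eq_mul, mul_div_mul_left _ _ (inv_ne_zero (sub_ne_zero.2 h)), sub_div,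
      div_eq_mul_inv (G p)]
  have huI : ∀ y : ℝ, y ∈ Set.uIcc (-(k : ℝ)) (-((k + 1 : ℕ) : ℝ)) →
      -((k : ℝ) + 1) ≤ y ∧ y ≤ -(k : ℝ) := by
    intro y hy
    rw [Set.uIcc_of_ge (by push_cast; linarith)] at hy
    push_cast at hy
    exact hy
  have hne : ∀ (t y : ℝ), (t ≠ 0 ∨ y ≠ -((k : ℝ) + 1 / 2)) → (t : ℂ) + y * Complex.I ≠ p := by
    intro t y h h0
    have h1 := congrArg Complex.re h0
    have h2 := congrArg Complex.im h0
    rw [pre] at h1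
    rw [pim] at h2
    simp only [Complex.add_re, Complex.ofReal_re, Complex.re_ofReal_mul, Complex.I_re, mul_zero,
      add_zero] at h1
    simp only [Complex.add_im, Complex.ofReal_im, Complex.im_ofReal_mul, Complex.I_im, mul_one,
      zero_add] at h2
    rcases h with h | h
    · exact h h1
    · exact h h2
  have hline : ∀ y : ℝ, -((k : ℝ) + 1) ≤ y → y ≤ -(k : ℝ) →
      Continuous fun t : ℝ => G (t + (y : ℂ) * Complex.I) := by
    intro y h1 h2
    refine hc.comp_continuous (by fun_prop) fun t => ?_
    constructor
    · simpa only [Complex.add_im, Complex.ofReal_im, Complex.im_ofReal_mul, Complex.I_im, mul_one,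
        zero_add] using h1
    · simpa only [Complex.add_im, Complex.ofReal_im, Complex.im_ofReal_mul, Complex.I_im, mul_one,
        zero_add] using h2
  have hlb : ∀ y : ℝ, -((k : ℝ) + 1) ≤ y → y ≤ -(k : ℝ) → ∀ t : ℝ,
      ‖G (t + (y : ℂ) * Complex.I)‖ ≤ M * (1 + |t|) ^ (-(1 + δ)) * Real.cosh (π * t) := by
    intro y h1 h2 t
    have := hb (t + (y : ℂ) * Complex.I) (by simpa using h1) (by simpa using h2)
    simpa using this
  have i1 := (line_integrable k G M δ hδ (hline _ (by linarith) le_rfl)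
    (hlb _ (by linarith) le_rfl)).1
  have i2 := (line_integrable (k + 1) G M δ hδ (hline _ (by push_cast; linarith) (by push_cast; linarith))
    (hlb _ (by push_cast; linarith) (by push_cast; linarith))).1
  have iE : ∀ j : ℕ, Integrable (fun t : ℝ =>
      G p * (Cf (t + ((-(j : ℝ) : ℝ) : ℂ) * Complex.I))⁻¹) ∧
      ∫ t : ℝ, G p * (Cf (t + ((-(j : ℝ) : ℝ) : ℂ) * Complex.I))⁻¹ = G p * (-1) ^ j := by
    intro j
    have e : (fun t : ℝ => G p * (Cf (t + ((-(j : ℝ) : ℝ) : ℂ) * Complex.I))⁻¹) =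
        fun t : ℝ => (G p * (-1) ^ j) * (((Real.cosh (π * t))⁻¹ : ℝ) : ℂ) := by
      funext t
      simp only [Cf]
      rw [cosh_neg_nat, mul_inv, ← inv_pow]
      push_cast
      norm_num
      ring
    rw [e]
    refine ⟨integrable_inv_cosh.ofReal.const_mul _, ?_⟩
    rw [integral_const_mul, integral_complex_ofReal, integral_inv_cosh]
    simp
  have gl : ∀ j : ℕ, (fun t : ℝ => g (t + ((-(j : ℝ) : ℝ) : ℂ) * Complex.I)) = fun t : ℝ =>
      G (t + ((-(j : ℝ) : ℝ) : ℂ) * Complex.I) / Cf (t + ((-(j : ℝ) : ℝ) : ℂ) * Complex.I) -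
      G p * (Cf (t + ((-(j : ℝ) : ℝ) : ℂ) * Complex.I))⁻¹ := by
    intro j
    funext t
    refine hg _ (hne _ _ (Or.inr ?_))
    intro h
    have h1 : (2 * j : ℝ) = 2 * k + 1 := by linarith
    have h2 : 2 * j = 2 * k + 1 := by exact_mod_cast h1
    omega
  have shift := line_shift g (-(k : ℝ)) (-((k + 1 : ℕ) : ℝ)) p
    (fun T => 2 * M * (1 + T) ^ (-(1 + δ)) + 2 * ‖G p‖ * (Real.cosh (π * T))⁻¹)
    (by
      have h1 : ContinuousOn g S :=
        ((continuousOn_dslope hSp).2 ⟨hc, hGp⟩).div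
          ((continuousOn_dslope hSp).2 ⟨hCd.continuous.continuousOn, hCd p⟩) hden
      exact h1.mono fun s hs => huI _ hs)
    (by
      intro s hs hsp
      have hle : -((k + 1 : ℕ) : ℝ) ≤ -(k : ℝ) := by push_cast; linarith
      rw [min_eq_right hle, max_eq_left hle] at hs
      push_cast at hs
      refine DifferentiableAt.div ((differentiableAt_dslope_of_ne hsp).2 (hd s hs.1 hs.2))
        ((differentiableAt_dslope_of_ne hsp).2 (hCd s)) (hden s ⟨hs.1.le, hs.2.le⟩))
    (by
      have h1 : Filter.Tendsto (fun T : ℝ => (1 + T) ^ (-(1 + δ))) Filter.atTop (nhds 0) :=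
        (tendsto_rpow_neg_atTop (by linarith : 0 < 1 + δ)).comp
          (Filter.tendsto_atTop_add_const_left _ _ Filter.tendsto_id)
      have h2 : Filter.Tendsto (fun T : ℝ => (Real.cosh (π * T))⁻¹) Filter.atTop (nhds 0) := by
        refine tendsto_inv_atTop_zero.comp (Filter.tendsto_atTop_mono (fun T => ?_)
          Filter.tendsto_id)
        have := one_add_sq_le_cosh T
        simp only [id]
        nlinarith [sq_nonneg (T - 1)]
      simpa using (h1.const_mul (2 * M)).add (h2.const_mul (2 * ‖G p‖)))
    (by
      intro t y ht hy
      have hy' := huI y hy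
      have ht0 : t ≠ 0 := by rintro rfl; norm_num at ht
      rw [hg _ (hne t y (Or.inl ht0))]
      have hcp := Real.cosh_pos (π * t)
      have hn := cosh_norm_ge ht y
      have hn0 : 0 < ‖Cf (t + y * Complex.I)‖ := lt_of_lt_of_le (by positivity) hn
      have hce : Real.cosh (π * |t|) = Real.cosh (π * t) := by
        rw [← Real.cosh_abs (π * t), abs_mul, abs_of_pos Real.pi_pos]
      have hinv : ‖Cf (t + y * Complex.I)‖⁻¹ ≤ 2 * (Real.cosh (π * t))⁻¹ := by
        have := inv_anti₀ (by positivity) hn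
        rwa [inv_div, div_eq_mul_inv] at this
      rw [hce]
      refine (norm_sub_le _ _).trans (add_le_add ?_ ?_)
      · rw [norm_div, div_eq_mul_inv]
        refine (mul_le_mul (hlb y hy'.1 hy'.2 t) hinv (by positivity)
          ((norm_nonneg _).trans (hlb y hy'.1 hy'.2 t))).trans (le_of_eq ?_)
        field_simp
      · rw [norm_mul, norm_inv]
        refine (mul_le_mul_of_nonneg_left hinv (norm_nonneg _)).trans (le_of_eq ?_)
        ring)
    (by rw [gl]; exact i1.sub (iE k).1)
    (by rw [gl]; exact i2.sub (iE (k + 1)).1)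
  rw [gl, gl, integral_sub i1 (iE k).1, integral_sub i2 (iE (k + 1)).1, (iE k).2,
    (iE (k + 1)).2] at shift
  rw [pow_succ] at shift
  linear_combination shift

lemma main_bound {A δ : ℝ} {H : ℂ → ℂ} {CH : ℝ}
    (hCH : ∀ s : ℂ, |s.im| ≤ A → ‖H s‖ ≤ CH * (1 + ‖s‖) ^ (-(2 + δ))) (hδ : 0 < δ)
    {x : ℝ} (hx : 0 < x) {s : ℂ} (h1 : -A ≤ s.im) (h2 : s.im ≤ 0) :
    ‖H s * besselJ (2 * Complex.I * s) x * s‖ ≤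
      (4 * CH * Real.exp ((x / 2) ^ 2) * Real.exp (-2 * s.im * Real.log (x / 2))) *
        (1 + |s.re|) ^ (-(1 + δ)) * Real.cosh (π * s.re) := by
  have hsA : |s.im| ≤ A := by rw [abs_of_nonpos h2]; linarith
  have hA0 : 0 ≤ A := (abs_nonneg _).trans hsA
  have hCH0 : 0 ≤ CH := by
    have := hCH 0 (by simpa using hA0)
    simp at this
    exact (norm_nonneg _).trans this
  have hre : (2 * Complex.I * s).re = -2 * s.im := by simp
  have him : (2 * Complex.I * s).im = 2 * s.re := by simp
  have hJ := bessel_bound hx (ν := 2 * Complex.I * s) (by rw [hre]; linarith)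
  rw [hre, him] at hJ
  have hcp := Real.cosh_pos (π * s.re)
  have hsq : √(Real.cosh (π * (2 * s.re))) ≤ 2 * Real.cosh (π * s.re) := by
    rw [Real.sqrt_le_left (by positivity), show π * (2 * s.re) = 2 * (π * s.re) by ring,
      Real.cosh_two_mul, Real.sinh_sq]
    nlinarith
  have hHs : ‖H s‖ * ‖s‖ ≤ CH * (1 + |s.re|) ^ (-(1 + δ)) := by
    have hn : 0 < 1 + ‖s‖ := by positivity
    calc ‖H s‖ * ‖s‖ ≤ (CH * (1 + ‖s‖) ^ (-(2 + δ))) * (1 + ‖s‖) := by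
          refine mul_le_mul (hCH s hsA) (by linarith) (norm_nonneg _) (by positivity)
      _ = CH * (1 + ‖s‖) ^ (-(1 + δ)) := by
          rw [mul_assoc, ← Real.rpow_add_one hn.ne']
          congr 2; ring
      _ ≤ CH * (1 + |s.re|) ^ (-(1 + δ)) := by
          refine mul_le_mul_of_nonneg_left ?_ hCH0
          refine Real.rpow_le_rpow_of_nonpos (by positivity) ?_ (by linarith)
          linarith [Complex.abs_re_le_norm s]
  calc ‖H s * besselJ (2 * Complex.I * s) x * s‖
      = (‖H s‖ * ‖s‖) * ‖besselJ (2 * Complex.I * s) x‖ := by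
        rw [norm_mul, norm_mul]; ring
    _ ≤ (CH * (1 + |s.re|) ^ (-(1 + δ))) * ((2 * (2 * Real.cosh (π * s.re)) *
        Real.exp (-2 * s.im * Real.log (x / 2))) * Real.exp ((x / 2) ^ 2)) := by
        refine mul_le_mul hHs (hJ.trans ?_) (norm_nonneg _) (by positivity)
        gcongr
    _ = _ := by ring

/-- For `h ∈ 𝓗(A,δ)` with `A > 13` and `0 < x < 4π`, the integral defining `H⁺(x)` converges
absolutely, and `H⁺(x)` equals `(4/π) ∑_{k<⌊A⌋} (-1)^k (k+1/2) h(-i(k+1/2)) J_{2k+1}(x)`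
up to an error `O_A(x^{2⌊A⌋})`. -/
theorem Hplus_expansion (A δ : ℝ) (hA : 13 < A) (hδ : 0 < δ) (h : ℝ → ℝ) (H : ℂ → ℂ)
    (hh : IsInHClass A δ h H) :
    ∃ C : ℝ, ∀ x : ℝ, 0 < x → x < 4 * π →
      Integrable (fun t : ℝ =>
        (h t : ℂ) * besselJ (2 * Complex.I * t) x * ((t : ℂ) / (Real.cosh (π * t) : ℂ))) ∧
      ‖Hplus h x - (4 / (π : ℂ)) * ∑ k ∈ Finset.range ⌊A⌋₊,
          (-1) ^ k * ((k : ℂ) + 1 / 2) * H (-Complex.I * ((k : ℂ) + 1 / 2)) *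
            besselJ (2 * k + 1) x‖ ≤ C * x ^ (2 * ⌊A⌋₊) := by
  
  obtain ⟨CH, hCH⟩ := hh.bound
  have hCH0 : 0 ≤ CH := by
    have := hCH 0 (by simp; linarith)
    simp at this
    exact (norm_nonneg _).trans this
  set N := ⌊A⌋₊ with hN
  have hNA : (N : ℝ) ≤ A := Nat.floor_le (by linarith)
  set K : ℝ := ∫ t : ℝ, (1 + |t|) ^ (-(1 + δ)) with hK
  have hK0 : 0 ≤ K := integral_nonneg fun t => by positivity
  have hpi := Real.pi_pos
  refine ⟨2 / π * (4 * CH * Real.exp ((2 * π) ^ 2) * K), fun x hx0 hx4 => ?_⟩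
  let G : ℂ → ℂ := fun s => H s * besselJ (2 * Complex.I * s) x * s
  have hGb : ∀ s : ℂ, -A ≤ s.im → s.im ≤ 0 → ‖G s‖ ≤
      (4 * CH * Real.exp ((x / 2) ^ 2) * Real.exp (-2 * s.im * Real.log (x / 2))) *
        (1 + |s.re|) ^ (-(1 + δ)) * Real.cosh (π * s.re) :=
    fun s h1 h2 => main_bound hCH hδ hx0 h1 h2
  have hJd : ∀ s : ℂ, s.im ≤ 0 →
      DifferentiableAt ℂ (fun s : ℂ => besselJ (2 * Complex.I * s) x) s := by
    intro s hs
    have h1 : DifferentiableAt ℂ (fun ν => besselJ ν x) (2 * Complex.I * s) :=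
      bessel_differentiableAt hx0 (by simp; linarith)
    exact h1.comp s (by fun_prop)
  have hGc : ContinuousOn G {s : ℂ | -A ≤ s.im ∧ s.im ≤ 0} := by
    refine (ContinuousOn.mul ?_ ?_).mul continuousOn_id
    · refine hh.holo.continuousOn.mono fun s hs => ?_
      simp only [Set.mem_ofPred_eq]
      rw [abs_of_nonpos hs.2]; linarith [hs.1]
    · exact fun s hs => (hJd s hs.2).continuousAt.continuousWithinAt
  have hGd : ∀ s : ℂ, -A < s.im → s.im < 0 → DifferentiableAt ℂ G s := by
    intro s h1 h2
    refine (DifferentiableAt.mul ?_ (hJd s h2.le)).mul differentiableAt_id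
    refine hh.holo.differentiableAt ?_
    have ho : IsOpen {s : ℂ | |s.im| < A} :=
      isOpen_lt Complex.continuous_im.abs continuous_const
    refine Filter.mem_of_superset (ho.mem_nhds ?_) fun s hs => show |s.im| ≤ A from le_of_lt (show |s.im| < A from hs)
    simp only [Set.mem_ofPred_eq]
    rw [abs_of_neg h2]; linarith
  let L : ℕ → ℂ := fun k => ∫ t : ℝ, G (t + ((-(k : ℝ) : ℝ) : ℂ) * Complex.I) /
      Complex.cosh (π * (t + ((-(k : ℝ) : ℝ) : ℂ) * Complex.I))
  have hli : ∀ k : ℕ, k ≤ N →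
      Integrable (fun t : ℝ => G (t + ((-(k : ℝ) : ℝ) : ℂ) * Complex.I) /
        Complex.cosh (π * (t + ((-(k : ℝ) : ℝ) : ℂ) * Complex.I))) ∧
      ‖L k‖ ≤ (4 * CH * Real.exp ((x / 2) ^ 2) *
        Real.exp (-2 * (-(k : ℝ)) * Real.log (x / 2))) * K := by
    intro k hk
    have hk0 : (0 : ℝ) ≤ k := Nat.cast_nonneg k
    have hkN : (k : ℝ) ≤ N := by exact_mod_cast hk
    refine line_integrable k G _ δ hδ ?_ ?_
    · refine hGc.comp_continuous (by fun_prop) fun t => ?_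
      simp only [Set.mem_ofPred_eq, Complex.add_im, Complex.ofReal_im, Complex.im_ofReal_mul,
        Complex.I_im, mul_one, zero_add]
      constructor <;> linarith
    · intro t
      have e1 : ((t : ℂ) + ((-(k : ℝ) : ℝ) : ℂ) * Complex.I).im = -(k : ℝ) := by
        simp only [Complex.add_im, Complex.ofReal_im, Complex.im_ofReal_mul,
          Complex.I_im, mul_one, zero_add]
      have e2 : ((t : ℂ) + ((-(k : ℝ) : ℝ) : ℂ) * Complex.I).re = t := by
        simp only [Complex.add_re, Complex.ofReal_re, Complex.re_ofReal_mul,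
          Complex.I_re, mul_zero, add_zero]
      have := hGb ((t : ℂ) + ((-(k : ℝ) : ℝ) : ℂ) * Complex.I) (by rw [e1]; linarith)
        (by rw [e1]; linarith)
      rwa [e1, e2] at this
  have hstep : ∀ k : ℕ, k < N →
      L k = 2 * ((-1) ^ k * G (-Complex.I * ((k : ℂ) + 1 / 2))) + L (k + 1) := by
    intro k hk
    have hk0 : (0 : ℝ) ≤ k := Nat.cast_nonneg k
    have hkN : (k : ℝ) + 1 ≤ N := by exact_mod_cast hk
    refine pole_step k G (4 * CH * Real.exp ((x / 2) ^ 2) *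
      Real.exp (2 * ((k : ℝ) + 1) * |Real.log (x / 2)|)) δ hδ
      (hGc.mono fun s hs => ⟨by linarith [hs.1], by linarith [hs.2]⟩)
      (fun s h1 h2 => hGd s (by linarith) (by linarith)) fun s h1 h2 => ?_
    refine (hGb s (by linarith) (by linarith)).trans ?_
    have hcp := Real.cosh_pos (π * s.re)
    have : -2 * s.im * Real.log (x / 2) ≤ 2 * ((k : ℝ) + 1) * |Real.log (x / 2)| := by
      refine (mul_le_mul_of_nonneg_left (le_abs_self _) (by linarith)).trans ?_
      exact mul_le_mul_of_nonneg_right (by linarith) (abs_nonneg _)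
    gcongr
  have hsum : ∀ n : ℕ, n ≤ N → L 0 = (∑ k ∈ Finset.range n,
      2 * ((-1) ^ k * G (-Complex.I * ((k : ℂ) + 1 / 2)))) + L n := by
    intro n
    induction n with
    | zero => intro _; simp
    | succ n ih =>
      intro hn
      rw [Finset.sum_range_succ, ih (by omega), hstep n (by omega)]
      ring
  have e0 : (fun t : ℝ => G (t + ((-((0 : ℕ) : ℝ) : ℝ) : ℂ) * Complex.I) /
        Complex.cosh (π * (t + ((-((0 : ℕ) : ℝ) : ℝ) : ℂ) * Complex.I))) = fun t : ℝ =>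
        (h t : ℂ) * besselJ (2 * Complex.I * t) x * ((t : ℂ) / (Real.cosh (π * t) : ℂ)) := by
    funext t
    rw [cosh_neg_nat]
    simp only [G, Nat.cast_zero, neg_zero, Complex.ofReal_zero, zero_mul, add_zero, pow_zero,
      one_mul, hh.extends_h]
    ring
  have hi0 := (hli 0 (Nat.zero_le _)).1
  rw [e0] at hi0
  refine ⟨hi0, ?_⟩
  have hL0 : Hplus h x = (2 * Complex.I / (π : ℂ)) * L 0 := by
    simp only [L, Hplus]
    rw [e0]
  have hfin : Hplus h x - (4 / (π : ℂ)) * ∑ k ∈ Finset.range N,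
      (-1) ^ k * ((k : ℂ) + 1 / 2) * H (-Complex.I * ((k : ℂ) + 1 / 2)) *
        besselJ (2 * k + 1) x = (2 * Complex.I / (π : ℂ)) * L N := by
    rw [hL0, hsum N le_rfl, mul_add, Finset.mul_sum, Finset.mul_sum]
    have : ∀ k ∈ Finset.range N, (2 * Complex.I / (π : ℂ)) *
        (2 * ((-1) ^ k * G (-Complex.I * ((k : ℂ) + 1 / 2)))) = (4 / (π : ℂ)) *
        ((-1) ^ k * ((k : ℂ) + 1 / 2) * H (-Complex.I * ((k : ℂ) + 1 / 2)) *
        besselJ (2 * k + 1) x) := by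
      intro k _
      simp only [G]
      have e : 2 * Complex.I * (-Complex.I * ((k : ℂ) + 1 / 2)) = 2 * k + 1 := by
        linear_combination (-2 * (k : ℂ) - 1) * Complex.I_mul_I
      rw [e]
      linear_combination (-(4 / (π : ℂ)) * ((-1) ^ k * ((k : ℂ) + 1 / 2) *
        H (-Complex.I * ((k : ℂ) + 1 / 2)) * besselJ (2 * k + 1) x)) * Complex.I_mul_I
    rw [Finset.sum_congr rfl this]
    ring
  rw [hfin, norm_mul]
  have hn1 : ‖2 * Complex.I / (π : ℂ)‖ = 2 / π := by
    rw [norm_div, norm_mul, Complex.norm_I, Complex.norm_real, Real.norm_of_nonneg hpi.le]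
    simp
  have hexp : Real.exp (-2 * (-(N : ℝ)) * Real.log (x / 2)) = (x / 2) ^ (2 * N) := by
    rw [show -2 * (-(N : ℝ)) * Real.log (x / 2) = ((2 * N : ℕ) : ℝ) * Real.log (x / 2) by
      push_cast; ring, Real.exp_nat_mul, Real.exp_log (by positivity)]
  have hLN := (hli N le_rfl).2
  rw [hexp] at hLN
  rw [hn1]
  have hx2 : (x / 2) ^ 2 ≤ (2 * π) ^ 2 := by
    gcongr; linarith
  have hx3 : (x / 2) ^ (2 * N) ≤ x ^ (2 * N) := by
    gcongr; linarith
  calc 2 / π * ‖L N‖ ≤ 2 / π * ((4 * CH * Real.exp ((x / 2) ^ 2) * (x / 2) ^ (2 * N)) * K) := by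
        gcongr
    _ ≤ 2 / π * ((4 * CH * Real.exp ((2 * π) ^ 2) * x ^ (2 * N)) * K) := by
        gcongr
    _ = _ := by ring
end

section
/- Let A > 13 and δ > 0 be fixed and let h ∈ 𝓗(A,δ). Then there exists a constant C = C(A,h) such that |H⁺(x)| ≤ C·x for all x ∈ (0,4π); in particular, H⁺(x) → 0 as x → 0⁺. -/
open MeasureTheory Real Complex

lemma aux_norm_Gamma_le {w : ℂ} (hw : 0 < w.re) : ‖Complex.Gamma w‖ ≤ Real.Gamma w.re := by
  rw [Complex.Gamma_eq_integral hw, Complex.GammaIntegral, Real.Gamma_eq_integral hw]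
  refine (norm_integral_le_integral_norm _).trans (le_of_eq ?_)
  refine setIntegral_congr_fun measurableSet_Ioi (fun x hx => ?_)
  have hx' : (0:ℝ) < x := hx
  simp only [norm_mul]
  rw [Complex.norm_cpow_eq_rpow_re_of_pos hx', Complex.norm_real, Real.norm_of_nonneg (Real.exp_pos _).le]
  simp

lemma aux_norm_sin_le (z : ℂ) : ‖Complex.sin z‖ ≤ Real.exp |z.im| := by
  have h1 : ‖Complex.exp (-z * I)‖ ≤ Real.exp |z.im| := by
    rw [Complex.norm_exp]; apply Real.exp_le_exp.2; simpa using le_abs_self z.im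
  have h2 : ‖Complex.exp (z * I)‖ ≤ Real.exp |z.im| := by
    rw [Complex.norm_exp]; apply Real.exp_le_exp.2; simpa using neg_le_abs z.im
  rw [Complex.sin]
  have h3 := norm_sub_le (Complex.exp (-z * I)) (Complex.exp (z * I))
  rw [norm_div, norm_mul]
  simp only [norm_I, mul_one, Complex.norm_two]
  linarith

lemma aux_norm_cos_le (z : ℂ) : ‖Complex.cos z‖ ≤ Real.exp |z.im| := by
  have h1 : ‖Complex.exp (-z * I)‖ ≤ Real.exp |z.im| := by
    rw [Complex.norm_exp]; apply Real.exp_le_exp.2; simpa using le_abs_self z.im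
  have h2 : ‖Complex.exp (z * I)‖ ≤ Real.exp |z.im| := by
    rw [Complex.norm_exp]; apply Real.exp_le_exp.2; simpa using neg_le_abs z.im
  rw [Complex.cos]
  have h3 := norm_add_le (Complex.exp (z * I)) (Complex.exp (-z * I))
  rw [norm_div]
  simp only [Complex.norm_two]
  linarith

/-- `|cos (a+ib)|^2 = cos^2 a + sinh^2 b` -/
lemma aux_norm_cos_sq (z : ℂ) :
    ‖Complex.cos z‖ ^ 2 = Real.cos z.re ^ 2 + Real.sinh z.im ^ 2 := by
  rw [Complex.cos_eq z, ← Complex.normSq_eq_norm_sq, ← Complex.ofReal_cos, ← Complex.ofReal_sin,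
    ← Complex.ofReal_cosh, ← Complex.ofReal_sinh]
  have aux : ∀ a b c d : ℝ, Complex.normSq ((a : ℂ) * c - b * d * I) = (a * c) ^ 2 + (b * d) ^ 2 := by
    intro a b c d
    rw [Complex.normSq_apply]; simp; ring
  rw [aux]
  have h1 := Real.sin_sq_add_cos_sq z.re
  have h2 := Real.cosh_sq z.im
  have h3 : Real.sin z.re ^ 2 = 1 - Real.cos z.re ^ 2 := by linarith
  calc _ = Real.cos z.re ^ 2 * Real.cosh z.im ^ 2 + Real.sin z.re ^ 2 * Real.sinh z.im ^ 2 := by ring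
    _ = _ := by rw [h2, h3]; ring

lemma aux_exp_abs_le_cosh (y : ℝ) : Real.exp |y| ≤ 2 * Real.cosh y := by
  rw [← Real.cosh_abs, Real.cosh_eq]
  have := Real.exp_pos (-|y|)
  linarith

lemma aux_cosh_le_exp_abs (y : ℝ) : Real.cosh y ≤ Real.exp |y| := by
  rw [← Real.cosh_abs, Real.cosh_eq]
  have : Real.exp (-|y|) ≤ Real.exp |y| := Real.exp_le_exp.2 (by linarith [abs_nonneg y])
  linarith

lemma aux_cos_lower {z : ℂ} (h : |z.re| ≤ π / 4) :
    Real.exp (2 * |z.im|) / 4 ≤ ‖Complex.cos z ^ 2‖ := by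
  rw [norm_pow, aux_norm_cos_sq]
  have h1 : (1:ℝ) / 2 ≤ Real.cos z.re ^ 2 := by
    rw [Real.cos_sq]
    have : 0 ≤ Real.cos (2 * z.re) := by
      rw [abs_le] at h
      apply Real.cos_nonneg_of_mem_Icc; constructor <;> linarith
    linarith
  have h2 : Real.cosh (2 * z.im) = 1 + 2 * Real.sinh z.im ^ 2 := by
    rw [Real.cosh_two_mul, Real.cosh_sq]; ring
  have h3 := aux_exp_abs_le_cosh (2 * z.im)
  rw [abs_mul, abs_two] at h3
  linarith

lemma aux_sinh_le (y : ℝ) (hy : 0 ≤ y) : Real.sinh y ≤ y * Real.cosh y := by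
  have hd : ∀ x : ℝ, HasDerivAt (fun x => x * Real.cosh x - Real.sinh x) (x * Real.sinh x) x := by
    intro x
    have := ((hasDerivAt_id x).mul (Real.hasDerivAt_cosh x)).sub (Real.hasDerivAt_sinh x)
    convert! this using 1
    simp
  have hm : MonotoneOn (fun x => x * Real.cosh x - Real.sinh x) (Set.Ici 0) := by
    apply monotoneOn_of_deriv_nonneg (convex_Ici 0)
    · exact fun x _ => (hd x).continuousAt.continuousWithinAt
    · exact fun x _ => (hd x).differentiableAt.differentiableWithinAt
    · intro x hx
      simp at hx
      rw [(hd x).deriv]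
      exact mul_nonneg hx.le (Real.sinh_nonneg_iff.2 hx.le)
  have := hm (Set.mem_Ici.2 le_rfl) (Set.mem_Ici.2 hy) hy
  simp at this
  linarith

lemma aux_Gamma_line (τ : ℝ) : ‖(Complex.Gamma (1 + τ * I))⁻¹‖ ≤ Real.exp (π * |τ| / 2) := by
  by_cases h0 : τ = 0
  · simp [h0]
  have hτ : (τ : ℂ) * I ≠ 0 := by simp [h0]
  have hG : Complex.Gamma (1 + τ * I) * ((starRingEnd ℂ) (Complex.Gamma (1 + τ * I)))
      = π * τ / Complex.sinh (π * τ) := by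
    rw [← Complex.Gamma_conj]
    have e1 : (starRingEnd ℂ) (1 + τ * I) = 1 - τ * I := by simp; ring
    rw [e1, add_comm (1:ℂ), Complex.Gamma_add_one _ hτ, mul_assoc, Complex.Gamma_mul_Gamma_one_sub,
      ← mul_assoc (π : ℂ), Complex.sin_mul_I]
    field_simp
  rw [Complex.mul_conj, Complex.normSq_eq_norm_sq] at hG
  have hG' : ‖Complex.Gamma (1 + τ * I)‖ ^ 2 = π * τ / Real.sinh (π * τ) := by
    exact_mod_cast hG
  have hG2 : ‖Complex.Gamma (1 + τ * I)‖ ^ 2 = (π * |τ|) / Real.sinh (π * |τ|) := by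
    rw [hG']
    rcases abs_cases τ with ⟨h, _⟩ | ⟨h, _⟩ <;> rw [h]
    rw [mul_neg, Real.sinh_neg, neg_div_neg_eq]
  have hy : 0 < π * |τ| := mul_pos Real.pi_pos (abs_pos.2 h0)
  have hs : 0 < Real.sinh (π * |τ|) := Real.sinh_pos_iff.2 hy
  rw [norm_inv]
  apply abs_le_of_sq_le_sq' _ (Real.exp_pos _).le |>.2
  rw [inv_pow, hG2, inv_div, div_le_iff₀ hy, ← Real.exp_nat_mul]
  have h1 := aux_sinh_le _ hy.le
  have h2 := aux_cosh_le_exp_abs (π * |τ|)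
  rw [abs_of_pos hy] at h2
  have h3 : ((2:ℕ):ℝ) * (π * |τ| / 2) = π * |τ| := by push_cast; ring
  rw [h3]
  nlinarith

lemma aux_Gamma_line2 (τ : ℝ) : ‖(Complex.Gamma (3 + τ * I))⁻¹‖ ≤ Real.exp (π * |τ| / 2) := by
  have h1 : (1 : ℂ) + τ * I ≠ 0 := by
    intro h; have := congrArg Complex.re h; simp at this
  have h2 : (2 : ℂ) + τ * I ≠ 0 := by
    intro h; have := congrArg Complex.re h; simp at this
  have e : Complex.Gamma (3 + τ * I) = (2 + τ * I) * ((1 + τ * I) * Complex.Gamma (1 + τ * I)) := by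
    rw [← Complex.Gamma_add_one _ h1, show (1:ℂ) + τ * I + 1 = 2 + τ * I by ring,
      ← Complex.Gamma_add_one _ h2]
    congr 1; ring
  have n1 : 1 ≤ ‖(1 : ℂ) + τ * I‖ := by
    have := Complex.abs_re_le_norm ((1 : ℂ) + τ * I); simpa using this
  have n2 : 1 ≤ ‖(2 : ℂ) + τ * I‖ := by
    have := Complex.abs_re_le_norm ((2 : ℂ) + τ * I); simp at this; linarith
  rw [e, mul_inv, mul_inv, norm_mul, norm_mul, norm_inv, norm_inv]
  have := aux_Gamma_line τ
  have i1 := inv_le_one_of_one_le₀ n1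
  have i2 := inv_le_one_of_one_le₀ n2
  calc _ ≤ 1 * (1 * ‖(Complex.Gamma (1 + τ * I))⁻¹‖) := by gcongr
    _ ≤ _ := by simpa using this

lemma aux_Gamma_apriori {ν : ℂ} (h0 : 0 ≤ ν.re) (h2 : ν.re ≤ 2) (hi : 1 ≤ |ν.im|) :
    ‖(Complex.Gamma (1 + ν))⁻¹‖ ≤ 2 * Real.exp (π * |ν.im|) := by
  have hge : ∀ k : ℝ, 1 ≤ ‖(k : ℂ) - ν‖ := fun k => by
    have := Complex.abs_im_le_norm ((k : ℂ) - ν); simp at this; linarith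
  have hne : ∀ k : ℝ, (k : ℂ) - ν ≠ 0 := fun k h => by
    have := hge k; rw [h] at this; simp at this; linarith
  have g0 := hge 0
  have g1 := hge 1
  have g2 := hge 2
  have n0 := hne 0
  have n1 := hne 1
  have n2 := hne 2
  push_cast at g0 g1 g2 n0 n1 n2
  have e3 : Complex.Gamma (3 - ν) = (2 - ν) * ((1 - ν) * ((0 - ν) * Complex.Gamma (-ν))) := by
    rw [show (3 : ℂ) - ν = (2 - ν) + 1 by ring, Complex.Gamma_add_one _ n2,
      show (2 : ℂ) - ν = (1 - ν) + 1 by ring, Complex.Gamma_add_one _ n1,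
      show (1 : ℂ) - ν = (0 - ν) + 1 by ring, Complex.Gamma_add_one _ n0]
    simp
  have hr := Complex.Gamma_mul_Gamma_one_sub (-ν)
  rw [show (1 : ℂ) - -ν = 1 + ν by ring] at hr
  have hs : Complex.sin (π * -ν) ≠ 0 := by
    intro h
    rw [Complex.sin_eq_zero_iff] at h
    obtain ⟨k, hk⟩ := h
    have hpi : (π : ℂ) ≠ 0 := by simp [Real.pi_ne_zero]
    have : -ν = k := by
      apply mul_left_cancel₀ hpi; rw [hk]; ring
    have := congrArg Complex.im this
    simp at this
    rw [this] at hi; simp at hi; linarith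
  have hpi : (π : ℂ) ≠ 0 := by simp [Real.pi_ne_zero]
  have hGne : Complex.Gamma (1 + ν) ≠ 0 := by
    intro h; rw [h, mul_zero] at hr
    exact (div_ne_zero hpi hs) hr.symm
  have key : (Complex.Gamma (1 + ν))⁻¹ = Complex.Gamma (-ν) * Complex.sin (π * -ν) / π := by
    rw [eq_div_iff hs] at hr
    rw [eq_div_iff hpi, inv_mul_eq_iff_eq_mul₀ hGne]
    linear_combination -hr
  have b1 : ‖Complex.Gamma (-ν)‖ ≤ ‖Complex.Gamma (3 - ν)‖ := by
    rw [e3, norm_mul, norm_mul, norm_mul]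
    have := norm_nonneg (Complex.Gamma (-ν))
    calc ‖Complex.Gamma (-ν)‖ = 1 * (1 * (1 * ‖Complex.Gamma (-ν)‖)) := by ring
      _ ≤ _ := by gcongr
  have b2 : ‖Complex.Gamma (3 - ν)‖ ≤ 2 := by
    refine (aux_norm_Gamma_le (by simp; linarith)).trans ?_
    have hc := Real.convexOn_Gamma.le_max_of_mem_Icc (x := 1) (y := 3) (z := (3 - ν).re)
      (by simp) (by simp) (by constructor <;> simp <;> linarith)
    have t3 : Real.Gamma 3 = 2 := by
      rw [show (3:ℝ) = ((2:ℕ):ℝ) + 1 by norm_num, Real.Gamma_nat_eq_factorial]; simp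
    rw [Real.Gamma_one, t3] at hc
    simpa using hc
  have b3 := aux_norm_sin_le (π * -ν)
  have e4 : |((π : ℂ) * -ν).im| = π * |ν.im| := by
    simp [abs_mul, abs_of_pos Real.pi_pos]
  rw [e4] at b3
  rw [key, norm_div, norm_mul, Complex.norm_real, Real.norm_of_nonneg Real.pi_pos.le,
    div_le_iff₀ Real.pi_pos]
  have hE := Real.exp_pos (π * |ν.im|)
  calc _ ≤ 2 * Real.exp (π * |ν.im|) := by gcongr; exact b1.trans b2
    _ ≤ _ := by nlinarith [Real.pi_gt_three]

lemma aux_Gamma_strip {ν : ℂ} (h0 : 0 ≤ ν.re) (h2 : ν.re ≤ 2) :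
    ‖(Complex.Gamma (1 + ν))⁻¹‖ ≤ 4 * Real.exp (π * |ν.im| / 2) := by
  set c : ℂ → ℂ := fun s => Complex.cos (π / 4 * (s - 1)) ^ 2 with hc
  have hre : ∀ s : ℂ, ((π : ℂ) / 4 * (s - 1)) = ((π / 4 : ℝ) : ℂ) * (s - 1) := by
    intro s; push_cast; ring
  have clow : ∀ s : ℂ, 0 ≤ s.re → s.re ≤ 2 → Real.exp (π * |s.im| / 2) / 4 ≤ ‖c s‖ := by
    intro s hs0 hs2
    have hp := Real.pi_pos
    have : |((π : ℂ) / 4 * (s - 1)).re| ≤ π / 4 := by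
      rw [hre, Complex.re_ofReal_mul, abs_mul, abs_of_pos (by positivity)]
      have : |(s - 1).re| ≤ 1 := by rw [abs_le]; constructor <;> simp <;> linarith
      nlinarith
    have h := aux_cos_lower this
    rw [hre, Complex.im_ofReal_mul, abs_mul, abs_of_pos (by positivity : 0 < π / 4)] at h
    rw [hc]; simp only
    rw [hre]
    convert h using 3
    simp; ring
  have cupp : ∀ s : ℂ, ‖c s‖ ≤ Real.exp (π * |s.im| / 2) := by
    intro s
    have hp := Real.pi_pos
    have h := aux_norm_cos_le (π / 4 * (s - 1))
    rw [hre, Complex.im_ofReal_mul, abs_mul, abs_of_pos (by positivity : 0 < π / 4)] at h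
    simp only [hc, norm_pow]
    rw [hre]
    calc _ ≤ (Real.exp (π / 4 * |(s - 1).im|)) ^ 2 := by gcongr
      _ = _ := by rw [← Real.exp_nat_mul]; congr 1; simp; ring
  have cne : ∀ s : ℂ, 0 ≤ s.re → s.re ≤ 2 → c s ≠ 0 := by
    intro s hs0 hs2 h
    have := clow s hs0 hs2
    rw [h, norm_zero] at this
    have := Real.exp_pos (π * |s.im| / 2)
    linarith
  have key : ‖(Complex.Gamma (1 + ν))⁻¹ / c ν‖ ≤ 4 := by
    refine PhragmenLindelof.vertical_strip (f := fun s => (Complex.Gamma (1 + s))⁻¹ / c s)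
      (a := 0) (b := 2) ?_ ?_ ?_ ?_ h0 h2
    · apply DifferentiableOn.diffContOnCl
      have hcl : closure (Complex.re ⁻¹' Set.Ioo 0 2) ⊆ Complex.re ⁻¹' Set.Icc 0 2 := by
        apply closure_minimal
        · exact Set.preimage_mono Set.Ioo_subset_Icc_self
        · exact isClosed_Icc.preimage Complex.continuous_re
      intro s hs
      have hs' := hcl hs
      apply DifferentiableAt.differentiableWithinAt
      apply DifferentiableAt.div
      · exact (Complex.differentiable_one_div_Gamma (1 + s)).comp s (by fun_prop)
      · simp only [hc]; fun_prop
      · exact cne s hs'.1 hs'.2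
    · refine ⟨1, by linarith [Real.pi_gt_three], 4, ?_⟩
      apply Asymptotics.IsBigO.of_bound 8
      have : ∀ᶠ s : ℂ in Filter.comap (_root_.abs ∘ Complex.im) Filter.atTop, 1 ≤ |s.im| :=
        (Filter.eventually_ge_atTop (1:ℝ)).comap _
      rw [Filter.eventually_inf_principal]
      filter_upwards [this] with s hs hs'
      have h1 := aux_Gamma_apriori hs'.1.le hs'.2.le hs
      have h2 := clow s hs'.1.le hs'.2.le
      have h3 : (1:ℝ) / 4 ≤ ‖c s‖ := by
        have : (1 : ℝ) ≤ Real.exp (π * |s.im| / 2) := Real.one_le_exp (by positivity)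
        linarith
      have h4 : Real.exp (π * |s.im|) ≤ Real.exp (4 * Real.exp (1 * |s.im|)) := by
        apply Real.exp_le_exp.2
        have := Real.add_one_le_exp (1 * |s.im|)
        nlinarith [Real.pi_le_four, abs_nonneg s.im]
      rw [norm_div, Real.norm_of_nonneg (Real.exp_pos _).le, div_le_iff₀ (by linarith)]
      nlinarith [Real.exp_pos (π * |s.im|)]
    · intro s hs
      have h1 := aux_Gamma_line s.im
      have e : s = s.im * I := by apply Complex.ext <;> simp [hs]
      rw [← e] at h1
      have h2 := clow s (by simp [hs]) (by simp [hs])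
      have := Real.exp_pos (π * |s.im| / 2)
      rw [norm_div, div_le_iff₀ (by linarith)]
      linarith
    · intro s hs
      have h1 := aux_Gamma_line2 s.im
      have e : 1 + s = 3 + s.im * I := by apply Complex.ext <;> simp [hs]; norm_num
      rw [← e] at h1
      have h2 := clow s (by simp [hs]) (by simp [hs])
      have := Real.exp_pos (π * |s.im| / 2)
      rw [norm_div, div_le_iff₀ (by linarith)]
      linarith
  have h1 := cupp ν
  rw [norm_div, div_le_iff₀ (norm_pos_iff.2 (cne ν h0 h2))] at key
  linarith

lemma aux_cosh_ge (u : ℝ) : 1 + u ^ 2 ≤ Real.cosh (π * u) := by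
  have h1 : Real.cosh (π * u) = 1 + 2 * Real.sinh (π * u / 2) ^ 2 := by
    rw [show π * u = 2 * (π * u / 2) by ring, Real.cosh_two_mul, Real.cosh_sq]
    rw [show 2 * (π * u / 2) / 2 = π * u / 2 by ring]; ring
  have h2 : (π * u / 2) ^ 2 ≤ Real.sinh (π * u / 2) ^ 2 := by
    rw [sq_le_sq, Real.abs_sinh]
    exact Real.self_le_sinh_iff.2 (abs_nonneg _)
  have h3 : u ^ 2 ≤ (π * u / 2) ^ 2 * 2 := by
    have : (9:ℝ) ≤ π ^ 2 := by nlinarith [Real.pi_gt_three]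
    nlinarith [sq_nonneg u]
  linarith

lemma aux_norm_cosh_sq (z : ℂ) :
    ‖Complex.cosh (π * z)‖ ^ 2 = Real.cos (π * z.im) ^ 2 + Real.sinh (π * z.re) ^ 2 := by
  rw [← Complex.cos_mul_I, aux_norm_cos_sq]
  simp

lemma aux_cosh_ne {z : ℂ} (h1 : -1 ≤ z.im) (h2 : z.im ≤ 0) (hz : z ≠ -I / 2) :
    Complex.cosh (π * z) ≠ 0 := by
  intro h
  have hs := aux_norm_cosh_sq z
  rw [h, norm_zero] at hs
  have a1 : Real.cos (π * z.im) = 0 := by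
    nlinarith [sq_nonneg (Real.cos (π * z.im)), sq_nonneg (Real.sinh (π * z.re))]
  have a2 : Real.sinh (π * z.re) = 0 := by
    nlinarith [sq_nonneg (Real.cos (π * z.im)), sq_nonneg (Real.sinh (π * z.re))]
  have a3 : z.re = 0 := by
    rw [Real.sinh_eq_zero] at a2; simpa [Real.pi_ne_zero] using a2
  rw [Real.cos_eq_zero_iff] at a1
  obtain ⟨k, hk⟩ := a1
  have a4 : z.im = (2 * k + 1) / 2 := by
    apply mul_left_cancel₀ Real.pi_ne_zero; rw [hk]; ring
  have k1 : k = -1 := by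
    have b1 : (-2 : ℝ) < k := by linarith
    have b2 : (k : ℝ) < 0 := by linarith
    have b1' : (-2 : ℤ) < k := by exact_mod_cast b1
    have b2' : k < 0 := by exact_mod_cast b2
    omega
  apply hz
  rw [k1] at a4
  apply Complex.ext
  · simp [a3]
  · simp [a4]; norm_num

lemma aux_cosh_sub_I (u : ℂ) : Complex.cosh (π * (u - I)) = - Complex.cosh (π * u) := by
  rw [mul_sub, Complex.cosh_sub, Complex.cosh_mul_I, Complex.sinh_mul_I]
  simp

lemma aux_integrable_inv_cosh :
    Integrable (fun u : ℝ => (1 : ℂ) / (Real.cosh (π * u) : ℂ)) := by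
  refine (integrable_inv_one_add_sq).mono' ?_ ?_
  · apply Continuous.aestronglyMeasurable
    refine Continuous.div continuous_const ?_ ?_
    · exact Complex.continuous_ofReal.comp (Real.continuous_cosh.comp (by fun_prop))
    · intro u
      exact_mod_cast (Real.cosh_pos _).ne'
  · refine Filter.Eventually.of_forall fun u => ?_
    rw [norm_div, norm_one, Complex.norm_real, Real.norm_of_nonneg (Real.cosh_pos _).le, one_div]
    apply inv_anti₀ (by positivity) (aux_cosh_ge u)

lemma aux_quot_bound {K r u : ℝ} {n : ℂ} (hb : ‖n‖ ≤ K * Real.exp (π * |u|) * (1 + |u|) ^ (-r)) :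
    ‖n / (Real.cosh (π * u) : ℂ)‖ ≤ 2 * K * (1 + ‖u‖) ^ (-r) := by
  rw [norm_div, Complex.norm_real, Real.norm_of_nonneg (Real.cosh_pos _).le,
    div_le_iff₀ (Real.cosh_pos _), Real.norm_eq_abs]
  refine hb.trans ?_
  have h := aux_exp_abs_le_cosh (π * u)
  rw [abs_mul, abs_of_pos Real.pi_pos] at h
  have hp : 0 < (1 + |u|) ^ (-r) := by positivity
  have hK : 0 ≤ K := by
    have := (norm_nonneg n).trans hb
    by_contra hK
    push Not at hK
    have h1 : 0 < Real.exp (π * |u|) * (1 + |u|) ^ (-r) := by positivity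
    nlinarith
  calc _ = K * (1 + |u|) ^ (-r) * Real.exp (π * |u|) := by ring
    _ ≤ K * (1 + |u|) ^ (-r) * (2 * Real.cosh (π * u)) := by gcongr
    _ = _ := by ring

lemma aux_integrable_line {N : ℂ → ℂ} {K r a : ℝ} (hr : 1 < r) (ha : -1 ≤ a) (ha' : a ≤ 0)
    (hc : ContinuousOn N {z : ℂ | -1 ≤ z.im ∧ z.im ≤ 0})
    (hb : ∀ z : ℂ, -1 ≤ z.im → z.im ≤ 0 →
      ‖N z‖ ≤ K * Real.exp (π * |z.re|) * (1 + |z.re|) ^ (-r)) :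
    Integrable (fun u : ℝ => N (u + a * I) / (Real.cosh (π * u) : ℂ)) := by
  have hi : Integrable (fun u : ℝ => 2 * K * (1 + ‖u‖) ^ (-r)) :=
    (integrable_one_add_norm (by simpa using hr)).const_mul _
  refine hi.mono' ?_ ?_
  · apply Continuous.aestronglyMeasurable
    refine Continuous.div ?_ ?_ ?_
    · refine hc.comp_continuous (by fun_prop) ?_
      intro u; simp [ha, ha']
    · exact Complex.continuous_ofReal.comp (Real.continuous_cosh.comp (by fun_prop))
    · intro u
      exact_mod_cast (Real.cosh_pos _).ne'
  · refine Filter.Eventually.of_forall fun u => ?_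
    apply aux_quot_bound
    simpa using hb (u + a * I) (by simpa using ha) (by simpa using ha')

lemma aux_sinh_lower {T : ℝ} (hT : 1 ≤ T) : Real.exp (π * T) / 4 ≤ Real.sinh (π * T) := by
  rw [Real.sinh_eq]
  have h1 : Real.exp (-(π * T)) ≤ 1 := by
    rw [Real.exp_le_one_iff]; nlinarith [Real.pi_pos]
  have h2 : π * T + 1 ≤ Real.exp (π * T) := Real.add_one_le_exp _
  have : 3 < π * T := by nlinarith [Real.pi_gt_three]
  linarith

lemma aux_shift {N : ℂ → ℂ} {K r : ℝ} (hr : 1 < r)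
    (hc : ContinuousOn N {z : ℂ | -1 ≤ z.im ∧ z.im ≤ 0})
    (hd : DifferentiableOn ℂ N {z : ℂ | -1 < z.im ∧ z.im < 0})
    (hb : ∀ z : ℂ, -1 ≤ z.im → z.im ≤ 0 →
      ‖N z‖ ≤ K * Real.exp (π * |z.re|) * (1 + |z.re|) ^ (-r)) :
    ∫ u : ℝ, N u / (Real.cosh (π * u) : ℂ) =
      -(∫ u : ℝ, N (u - I) / (Real.cosh (π * u) : ℂ)) +
        2 * N (-I / 2) * ∫ u : ℝ, (1 : ℂ) / (Real.cosh (π * u) : ℂ) := by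
  set z0 : ℂ := -I / 2 with hz0
  set c : ℂ → ℂ := fun z => Complex.cosh (π * z) with hcdef
  set g : ℂ → ℂ := fun z => dslope N z0 z / dslope c z0 z with hg
  have z0im : z0.im = -1 / 2 := by simp [hz0]
  have z0re : z0.re = 0 := by simp [hz0]
  have hopen : IsOpen {z : ℂ | -1 < z.im ∧ z.im < 0} :=
    (isOpen_lt continuous_const Complex.continuous_im).inter
      (isOpen_lt Complex.continuous_im continuous_const)
  have z0mem : z0 ∈ {z : ℂ | -1 < z.im ∧ z.im < 0} := by
    simp only [Set.mem_ofPred_eq, z0im]; norm_num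
  have hnhds : {z : ℂ | -1 < z.im ∧ z.im < 0} ∈ nhds z0 := hopen.mem_nhds z0mem
  have hnhds' : {z : ℂ | -1 ≤ z.im ∧ z.im ≤ 0} ∈ nhds z0 :=
    Filter.mem_of_superset hnhds fun z hz => ⟨hz.1.le, hz.2.le⟩
  have cz0 : c z0 = 0 := by
    simp only [hcdef, hz0]
    rw [show (π : ℂ) * (-I / 2) = -((π / 2 : ℂ) * I) by ring, Complex.cosh_neg, Complex.cosh_mul_I]
    simp
  have cdiff : Differentiable ℂ c := by simp only [hcdef]; fun_prop
  have cder : deriv c z0 ≠ 0 := by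
    have h1 : HasDerivAt c (Complex.sinh (π * z0) * π) z0 := by
      have := (Complex.hasDerivAt_cosh (π * z0)).comp z0 ((hasDerivAt_id z0).const_mul (π : ℂ))
      simpa using! this
    rw [h1.deriv, hz0, show (π : ℂ) * (-I / 2) = -((π / 2 : ℂ) * I) by ring, Complex.sinh_neg,
      Complex.sinh_mul_I]
    simp [Real.pi_ne_zero]
  have cdsl : Differentiable ℂ (dslope c z0) := by
    rw [← differentiableOn_univ, Complex.differentiableOn_dslope Filter.univ_mem]
    exact cdiff.differentiableOn
  have dne : ∀ z : ℂ, -1 ≤ z.im → z.im ≤ 0 → dslope c z0 z ≠ 0 := by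
    intro z h1 h2
    by_cases hz : z = z0
    · rw [hz, dslope_same]; exact cder
    · rw [dslope_of_ne _ hz, slope_def_field, cz0, sub_zero]
      exact div_ne_zero (aux_cosh_ne h1 h2 hz) (sub_ne_zero.2 hz)
  have geq : ∀ z : ℂ, z ≠ z0 → g z = (N z - N z0) / c z := by
    intro z hz
    simp only [hg]
    rw [dslope_of_ne _ hz, dslope_of_ne _ hz, slope_def_field, slope_def_field, cz0, sub_zero]
    exact div_div_div_cancel_right₀ (sub_ne_zero.2 hz) _ _
  have gcont : ContinuousOn g {z : ℂ | -1 ≤ z.im ∧ z.im ≤ 0} := by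
    refine ContinuousOn.div ?_ cdsl.continuous.continuousOn fun z hz => dne z hz.1 hz.2
    rw [continuousOn_dslope hnhds']
    exact ⟨hc, hd.differentiableAt hnhds⟩
  have gdiff : DifferentiableOn ℂ g {z : ℂ | -1 < z.im ∧ z.im < 0} := by
    refine DifferentiableOn.div ?_ cdsl.differentiableOn fun z hz => dne z hz.1.le hz.2.le
    rw [Complex.differentiableOn_dslope hnhds]
    exact hd
  -- the two lines
  have i0 := aux_integrable_line (a := 0) hr (by norm_num) le_rfl hc hb
  have i1 := aux_integrable_line (a := -1) hr le_rfl (by norm_num) hc hb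
  have ic := aux_integrable_inv_cosh
  have g0 : ∀ u : ℝ, g (u + (0:ℝ) * I) = N (u + (0:ℝ) * I) / (Real.cosh (π * u) : ℂ)
      - N z0 * (1 / (Real.cosh (π * u) : ℂ)) := by
    intro u
    rw [geq]
    · simp only [hcdef]
      push_cast
      simp; ring
    · intro h; have := congrArg Complex.im h; rw [z0im] at this; norm_num at this
  have g1 : ∀ u : ℝ, g (u + (-1:ℝ) * I) = -(N (u + (-1:ℝ) * I) / (Real.cosh (π * u) : ℂ)
      - N z0 * (1 / (Real.cosh (π * u) : ℂ))) := by
    intro u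
    rw [geq]
    · simp only [hcdef]
      have e : (u : ℂ) + ((-1 : ℝ) : ℂ) * I = u - I := by push_cast; ring
      rw [e, aux_cosh_sub_I]
      push_cast
      rw [div_neg]; ring
    · intro h; have := congrArg Complex.im h; rw [z0im] at this; norm_num at this
  have ig0 : Integrable (fun u : ℝ => g (u + (0:ℝ) * I)) := by
    simp_rw [g0]; exact i0.sub (ic.const_mul _)
  have ig1 : Integrable (fun u : ℝ => g (u + (-1:ℝ) * I)) := by
    simp_rw [g1]; exact (i1.sub (ic.const_mul _)).neg
  -- rectangle
  have rect : ∀ T : ℝ, 0 < T →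
      (∫ x : ℝ in (-T)..T, g (x + (-1:ℝ) * I)) - (∫ x : ℝ in (-T)..T, g (x + (0:ℝ) * I)) +
      I • (∫ y : ℝ in (-1:ℝ)..0, g (T + y * I)) -
      I • (∫ y : ℝ in (-1:ℝ)..0, g ((-T : ℝ) + y * I)) = 0 := by
    intro T hT
    refine Complex.integral_boundary_rect_eq_zero_of_continuousOn_of_differentiableOn g
      ⟨-T, -1⟩ ⟨T, 0⟩ (gcont.mono ?_) (gdiff.mono ?_)
    · intro z hz
      have := hz.2
      simp only [Set.mem_preimage] at this
      rw [Set.uIcc_of_le (by norm_num)] at this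
      exact this
    · intro z hz
      have := hz.2
      simpa using this
  set M := ‖N z0‖ with hM
  have vbound : ∀ T : ℝ, 1 ≤ T → ∀ s : ℝ, |s| = T → ∀ y : ℝ, -1 ≤ y → y ≤ 0 →
      ‖g (s + y * I)‖ ≤ 4 * K * (1 + T) ^ (-r) + 4 * M * Real.exp (-(π * T)) := by
    intro T hT s hs y hy1 hy2
    have hre : ((s : ℂ) + y * I).re = s := by simp
    have him : ((s : ℂ) + y * I).im = y := by simp
    have hn := hb (s + y * I) (by rw [him]; exact hy1) (by rw [him]; exact hy2)
    rw [hre, hs] at hn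
    have hcs : Real.exp (π * T) / 4 ≤ ‖c (s + y * I)‖ := by
      refine (aux_sinh_lower hT).trans ?_
      apply le_of_sq_le_sq _ (norm_nonneg _)
      simp only [hcdef]
      rw [aux_norm_cosh_sq, hre]
      have : Real.sinh (π * T) ^ 2 = Real.sinh (π * s) ^ 2 := by
        rw [sq_eq_sq_iff_abs_eq_abs, Real.abs_sinh, Real.abs_sinh, abs_mul, abs_mul, hs,
          abs_of_pos (by linarith : 0 < T)]
      rw [this]
      nlinarith [sq_nonneg (Real.cos (π * ((s : ℂ) + y * I).im))]
    have hE := Real.exp_pos (π * T)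
    rw [geq, norm_div, div_le_iff₀ (by linarith)]
    · have h1 : ‖N (s + y * I) - N z0‖ ≤ K * Real.exp (π * T) * (1 + T) ^ (-r) + M :=
        (norm_sub_le _ _).trans (by gcongr)
      refine h1.trans ?_
      have hnn : 0 ≤ K * (1 + T) ^ (-r) := by
        have := (norm_nonneg _).trans hn
        by_contra hlt
        push Not at hlt
        nlinarith
      calc K * Real.exp (π * T) * (1 + T) ^ (-r) + M
          = (4 * K * (1 + T) ^ (-r) + 4 * M * Real.exp (-(π * T))) * (Real.exp (π * T) / 4) := by
            rw [Real.exp_neg]; field_simp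
        _ ≤ _ := by
          have : 0 ≤ 4 * K * (1 + T) ^ (-r) + 4 * M * Real.exp (-(π * T)) := by
            have : 0 ≤ M * Real.exp (-(π * T)) := by positivity
            nlinarith
          gcongr
    · intro h
      have := congrArg Complex.re h
      rw [hre, z0re] at this
      rw [this] at hs; simp at hs; linarith
  have btend : Filter.Tendsto (fun T : ℝ => 4 * K * (1 + T) ^ (-r) + 4 * M * Real.exp (-(π * T)))
      Filter.atTop (nhds 0) := by
    have t1 : Filter.Tendsto (fun T : ℝ => (1 + T) ^ (-r)) Filter.atTop (nhds 0) :=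
      (tendsto_rpow_neg_atTop (by linarith : 0 < r)).comp
        (Filter.tendsto_atTop_add_const_left _ 1 Filter.tendsto_id)
    have t2 : Filter.Tendsto (fun T : ℝ => Real.exp (-(π * T))) Filter.atTop (nhds 0) :=
      Real.tendsto_exp_neg_atTop_nhds_zero.comp (Filter.tendsto_id.const_mul_atTop Real.pi_pos)
    simpa using (t1.const_mul (4 * K)).add (t2.const_mul (4 * M))
  have vt : ∀ f : ℝ → ℝ, (∀ T, 1 ≤ T → |f T| = T) →
      Filter.Tendsto (fun T : ℝ => I • ∫ y : ℝ in (-1:ℝ)..0, g ((f T : ℝ) + y * I))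
        Filter.atTop (nhds 0) := by
    intro f hf
    apply squeeze_zero_norm' _ btend
    filter_upwards [Filter.eventually_ge_atTop 1] with T hT
    rw [norm_smul, norm_I, one_mul]
    have := intervalIntegral.norm_integral_le_of_norm_le_const (a := (-1:ℝ)) (b := 0)
      (f := fun y : ℝ => g ((f T : ℝ) + y * I))
      (C := 4 * K * (1 + T) ^ (-r) + 4 * M * Real.exp (-(π * T))) (by
        intro y hy
        rw [Set.uIoc_of_le (by norm_num)] at hy
        exact vbound T hT (f T) (hf T hT) y hy.1.le hy.2)
    simpa using this
  have v1 := vt (fun T => T) (fun T hT => abs_of_pos (by linarith))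
  have v2 := vt (fun T => -T) (fun T hT => by rw [abs_neg, abs_of_pos (by linarith)])
  have l0 := intervalIntegral_tendsto_integral ig0 Filter.tendsto_neg_atTop_atBot Filter.tendsto_id
  have l1 := intervalIntegral_tendsto_integral ig1 Filter.tendsto_neg_atTop_atBot Filter.tendsto_id
  have lim := ((l1.sub l0).add v1).sub v2
  have lim0 : Filter.Tendsto (fun _ : ℝ => (0:ℂ)) Filter.atTop
      (nhds ((∫ u : ℝ, g (u + (-1:ℝ) * I)) - (∫ u : ℝ, g (u + (0:ℝ) * I)) + 0 - 0)) := by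
    refine lim.congr' ?_
    filter_upwards [Filter.eventually_gt_atTop 0] with T hT
    exact rect T hT
  have heq := tendsto_nhds_unique lim0 tendsto_const_nhds
  simp_rw [g0, g1] at heq
  rw [integral_neg, integral_sub i1 (ic.const_mul _), integral_sub i0 (ic.const_mul _),
    integral_const_mul] at heq
  have e1 : ∀ u : ℝ, (u : ℂ) + ((-1 : ℝ) : ℂ) * I = u - I := fun u => by push_cast; ring
  have e0 : ∀ u : ℝ, (u : ℂ) + ((0 : ℝ) : ℂ) * I = u := fun u => by push_cast; ring
  simp_rw [e1, e0] at heq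
  linear_combination -heq

/-- The product `(ν+1)(ν+2)⋯(ν+m)`. -/
noncomputable def auxP (m : ℕ) (ν : ℂ) : ℂ := ∏ j ∈ Finset.range m, (ν + 1 + j)

/-- The terms of the normalized Bessel series. -/
noncomputable def auxTerm (x : ℝ) (m : ℕ) (ν : ℂ) : ℂ :=
  (-1) ^ m / ((Nat.factorial m : ℂ) * auxP m ν) * (((x / 2) ^ 2 : ℝ) : ℂ) ^ m

lemma auxP_norm {ν : ℂ} (hν : 0 ≤ ν.re) (m : ℕ) : 1 ≤ ‖auxP m ν‖ := by
  rw [auxP, norm_prod]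
  refine Finset.prod_induction _ (fun r : ℝ => 1 ≤ r)
    (fun a b ha hb => one_le_mul_of_one_le_of_one_le ha hb) le_rfl ?_
  intro j _
  have h := Complex.re_le_norm (ν + 1 + j)
  simp at h
  have : (0:ℝ) ≤ j := Nat.cast_nonneg j
  linarith

lemma auxP_ne {ν : ℂ} (hν : 0 ≤ ν.re) (m : ℕ) : auxP m ν ≠ 0 := by
  have := auxP_norm hν m
  intro h; rw [h, norm_zero] at this; linarith

lemma auxP_Gamma {ν : ℂ} (hν : 0 ≤ ν.re) (m : ℕ) :
    Complex.Gamma (m + ν + 1) = auxP m ν * Complex.Gamma (1 + ν) := by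
  induction m with
  | zero => simp [auxP, add_comm]
  | succ m ih =>
    have hne : (m : ℂ) + ν + 1 ≠ 0 := by
      intro h
      have := congrArg Complex.re h
      simp at this
      have : (0:ℝ) ≤ m := Nat.cast_nonneg m
      linarith
    rw [show ((m + 1 : ℕ) : ℂ) + ν + 1 = (m + ν + 1) + 1 by push_cast; ring,
      Complex.Gamma_add_one _ hne, ih, auxP, auxP, Finset.prod_range_succ]
    ring

lemma auxTerm_norm {ν : ℂ} (hν : 0 ≤ ν.re) (x : ℝ) (m : ℕ) :
    ‖auxTerm x m ν‖ ≤ ((x / 2) ^ 2) ^ m / (Nat.factorial m : ℝ) := by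
  have h1 := auxP_norm hν m
  rw [auxTerm, norm_mul, norm_div, norm_mul, norm_pow, norm_pow, norm_neg, norm_one, one_pow,
    Complex.norm_natCast, Complex.norm_real, Real.norm_of_nonneg (sq_nonneg _)]
  have hf : (0:ℝ) < Nat.factorial m := by exact_mod_cast Nat.factorial_pos m
  rw [div_eq_mul_inv (((x / 2) ^ 2) ^ m), mul_comm, one_div]
  gcongr
  nlinarith

lemma aux_besselJ {ν : ℂ} (hν : 0 ≤ ν.re) {x : ℝ} (hx : 0 < x) :
    besselJ ν x = Complex.exp (ν * Real.log (x / 2)) * (Complex.Gamma (1 + ν))⁻¹ *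
      ∑' m : ℕ, auxTerm x m ν := by
  rw [besselJ, ← tsum_mul_left]
  congr 1
  ext m
  rw [auxP_Gamma hν, auxTerm, add_mul, Complex.exp_add]
  have e : Complex.exp (2 * m * (Real.log (x / 2) : ℂ)) = (((x / 2) ^ 2 : ℝ) : ℂ) ^ m := by
    have h1 : Complex.exp (Real.log (x / 2) : ℂ) = ((x / 2 : ℝ) : ℂ) := by
      rw [← Complex.ofReal_exp, Real.exp_log (by positivity)]
    rw [show (2 : ℂ) * m * (Real.log (x / 2) : ℂ) = ((2 * m : ℕ) : ℂ) * (Real.log (x / 2) : ℂ) by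
      push_cast; ring, Complex.exp_nat_mul, h1, pow_mul]
    push_cast; rfl
  rw [e]
  simp only [div_eq_mul_inv, mul_inv]
  ring

lemma auxTerm_sum_norm {ν : ℂ} (hν : 0 ≤ ν.re) (x : ℝ) :
    ‖∑' m : ℕ, auxTerm x m ν‖ ≤ Real.exp ((x / 2) ^ 2) := by
  have hs : HasSum (fun m : ℕ => ((x / 2) ^ 2) ^ m / (Nat.factorial m : ℝ))
      (Real.exp ((x / 2) ^ 2)) := by
    rw [Real.exp_eq_exp_ℝ]
    exact NormedSpace.expSeries_div_hasSum_exp ((x / 2) ^ 2)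
  exact tsum_of_norm_bounded hs (auxTerm_norm hν x)

lemma auxTerm_diffAt {ν : ℂ} (hν : 0 ≤ ν.re) (x : ℝ) (m : ℕ) :
    DifferentiableAt ℂ (auxTerm x m) ν := by
  unfold auxTerm
  have : DifferentiableAt ℂ (auxP m) ν := by
    unfold auxP; fun_prop
  have hf : (Nat.factorial m : ℂ) ≠ 0 := by exact_mod_cast Nat.factorial_ne_zero m
  exact ((differentiableAt_const _).div (this.const_mul _)
    (mul_ne_zero hf (auxP_ne hν m))).mul_const _

lemma auxTerm_sum_cont (x : ℝ) :
    ContinuousOn (fun ν => ∑' m : ℕ, auxTerm x m ν) {ν : ℂ | 0 ≤ ν.re} :=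
  continuousOn_tsum (fun m ν hν => (auxTerm_diffAt hν x m).continuousAt.continuousWithinAt)
    (Real.summable_pow_div_factorial ((x / 2) ^ 2)) (fun m ν hν => auxTerm_norm hν x m)

lemma auxTerm_sum_diff (x : ℝ) :
    DifferentiableOn ℂ (fun ν => ∑' m : ℕ, auxTerm x m ν) {ν : ℂ | 0 < ν.re} :=
  Complex.differentiableOn_tsum_of_summable_norm (Real.summable_pow_div_factorial ((x / 2) ^ 2))
    (fun m ν (hν : 0 < ν.re) => (auxTerm_diffAt hν.le x m).differentiableWithinAt)
    (isOpen_lt continuous_const Complex.continuous_re)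
    (fun m ν (hν : 0 < ν.re) => auxTerm_norm hν.le x m)

lemma aux_besselJ_bound {ν : ℂ} (h0 : 0 ≤ ν.re) (h2 : ν.re ≤ 2) {x : ℝ} (hx : 0 < x)
    (hx' : x < 4 * π) :
    ‖besselJ ν x‖ ≤ 4 * Real.exp ((2 * π) ^ 2) * (x / 2) ^ ν.re * Real.exp (π * |ν.im| / 2) := by
  rw [aux_besselJ h0 hx, norm_mul, norm_mul]
  have h3 : ‖Complex.exp (ν * Real.log (x / 2))‖ = (x / 2) ^ ν.re := by
    rw [Complex.norm_exp, Real.rpow_def_of_pos (by positivity)]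
    simp [mul_comm]
  have h4 := aux_Gamma_strip h0 h2
  have h5 : ‖∑' m : ℕ, auxTerm x m ν‖ ≤ Real.exp ((2 * π) ^ 2) := by
    refine (auxTerm_sum_norm h0 x).trans ?_
    apply Real.exp_le_exp.2
    have : x / 2 ≤ 2 * π := by linarith
    gcongr
  rw [h3]
  calc _ ≤ (x / 2) ^ ν.re * (4 * Real.exp (π * |ν.im| / 2)) * Real.exp ((2 * π) ^ 2) := by gcongr
    _ = _ := by ring

lemma aux_besselJ_cont {x : ℝ} (hx : 0 < x) :
    ContinuousOn (fun ν => besselJ ν x) {ν : ℂ | 0 ≤ ν.re} := by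
  refine ContinuousOn.congr (f := fun ν => Complex.exp (ν * Real.log (x / 2)) *
    (Complex.Gamma (1 + ν))⁻¹ * ∑' m : ℕ, auxTerm x m ν) ?_ (fun ν hν => aux_besselJ hν hx)
  refine ContinuousOn.mul (Continuous.continuousOn ?_) (auxTerm_sum_cont x)
  refine Continuous.mul (by fun_prop) ?_
  exact Complex.differentiable_one_div_Gamma.continuous.comp (by fun_prop)

lemma aux_besselJ_diff {x : ℝ} (hx : 0 < x) :
    DifferentiableOn ℂ (fun ν => besselJ ν x) {ν : ℂ | 0 < ν.re} := by
  refine DifferentiableOn.congr (f := fun ν => Complex.exp (ν * Real.log (x / 2)) *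
    (Complex.Gamma (1 + ν))⁻¹ * ∑' m : ℕ, auxTerm x m ν) ?_
    (fun ν (hν : 0 < ν.re) => aux_besselJ hν.le hx)
  refine DifferentiableOn.mul (Differentiable.differentiableOn ?_) (auxTerm_sum_diff x)
  refine Differentiable.mul (by fun_prop) ?_
  exact Complex.differentiable_one_div_Gamma.comp (by fun_prop)

lemma aux_main (A δ : ℝ) (hA : 13 < A) (hδ : 0 < δ) (h : ℝ → ℝ) (H : ℂ → ℂ)
    (hh : IsInHClass A δ h H) :
    ∃ C : ℝ, ∀ x : ℝ, 0 < x → x < 4 * π → ‖Hplus h x‖ ≤ C * x := by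
  obtain ⟨B, hB⟩ := hh.bound
  have hB0 : 0 ≤ B := by
    have := (norm_nonneg _).trans (hB 0 (by simp; linarith))
    simpa using this
  set D : ℝ := B * (4 * Real.exp ((2 * π) ^ 2)) with hD
  have hD0 : 0 ≤ D := by positivity
  set J1 : ℝ := ∫ u : ℝ, (1 + ‖u‖) ^ (-(1 + δ)) with hJ1
  have hJ1' : 0 ≤ J1 := integral_nonneg fun u => by positivity
  set J2 : ℝ := ‖∫ u : ℝ, (1 : ℂ) / (Real.cosh (π * u) : ℂ)‖ with hJ2
  refine ⟨2 / π * (2 * D * π * J1 + D * J2), fun x hx hx' => ?_⟩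
  have hx2 : 0 < x / 2 := by positivity
  set N : ℂ → ℂ := fun z => H z * besselJ (2 * I * z) x * z with hN
  have hre : ∀ z : ℂ, (2 * I * z).re = -2 * z.im := by intro z; simp
  have him : ∀ z : ℂ, (2 * I * z).im = 2 * z.re := by intro z; simp
  have hNb : ∀ z : ℂ, -1 ≤ z.im → z.im ≤ 0 →
      ‖N z‖ ≤ D * (x / 2) ^ (-2 * z.im) * Real.exp (π * |z.re|) * (1 + |z.re|) ^ (-(1 + δ)) := by
    intro z h1 h2
    have b1 := hB z (by rw [abs_le]; constructor <;> linarith)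
    have b2 := aux_besselJ_bound (ν := 2 * I * z) (by rw [hre]; linarith) (by rw [hre]; linarith)
      hx hx'
    rw [hre, him, abs_mul, abs_two, show π * (2 * |z.re|) / 2 = π * |z.re| by ring] at b2
    have b3 : (1 + ‖z‖) ^ (-(2 + δ)) * ‖z‖ ≤ (1 + |z.re|) ^ (-(1 + δ)) := by
      have p : 0 < 1 + ‖z‖ := by positivity
      calc (1 + ‖z‖) ^ (-(2 + δ)) * ‖z‖ ≤ (1 + ‖z‖) ^ (-(2 + δ)) * (1 + ‖z‖) := by
            gcongr; linarith
        _ = (1 + ‖z‖) ^ (-(1 + δ)) := by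
            rw [← Real.rpow_add_one p.ne']; congr 1; ring
        _ ≤ _ := by
            apply Real.rpow_le_rpow_of_nonpos (by positivity) _ (by linarith)
            linarith [Complex.abs_re_le_norm z]
    simp only [hN, norm_mul]
    calc ‖H z‖ * ‖besselJ (2 * I * z) x‖ * ‖z‖
        ≤ (B * (1 + ‖z‖) ^ (-(2 + δ))) * (4 * Real.exp ((2 * π) ^ 2) * (x / 2) ^ (-2 * z.im) *
          Real.exp (π * |z.re|)) * ‖z‖ := by gcongr
      _ = D * (x / 2) ^ (-2 * z.im) * Real.exp (π * |z.re|) *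
          ((1 + ‖z‖) ^ (-(2 + δ)) * ‖z‖) := by rw [hD]; ring
      _ ≤ _ := by gcongr
  -- a bound uniform in the strip
  have hNb' : ∀ z : ℂ, -1 ≤ z.im → z.im ≤ 0 →
      ‖N z‖ ≤ (D * (1 + x / 2) ^ (2 : ℝ)) * Real.exp (π * |z.re|) * (1 + |z.re|) ^ (-(1 + δ)) := by
    intro z h1 h2
    refine (hNb z h1 h2).trans ?_
    have : (x / 2) ^ (-2 * z.im) ≤ (1 + x / 2) ^ (2 : ℝ) := by
      calc (x / 2) ^ (-2 * z.im) ≤ (1 + x / 2) ^ (-2 * z.im) := by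
            apply Real.rpow_le_rpow hx2.le <;> linarith
        _ ≤ _ := by apply Real.rpow_le_rpow_of_exponent_le <;> linarith
    gcongr
  have hNc : ContinuousOn N {z : ℂ | -1 ≤ z.im ∧ z.im ≤ 0} := by
    refine ContinuousOn.mul (ContinuousOn.mul ?_ ?_) continuousOn_id
    · refine hh.holo.continuousOn.mono fun z hz => ?_
      have h1 : -1 ≤ z.im := hz.1
      have h2 : z.im ≤ 0 := hz.2
      change |z.im| ≤ A
      rw [abs_le]; constructor <;> linarith
    · refine (aux_besselJ_cont hx).comp (f := fun z : ℂ => 2 * I * z)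
        (Continuous.continuousOn (by fun_prop)) fun z hz => ?_
      have h2 : z.im ≤ 0 := hz.2
      change 0 ≤ (2 * I * z).re
      rw [hre]; linarith
  have hNd : DifferentiableOn ℂ N {z : ℂ | -1 < z.im ∧ z.im < 0} := by
    refine DifferentiableOn.mul (DifferentiableOn.mul ?_ ?_) differentiableOn_id
    · refine hh.holo.mono fun z hz => ?_
      have h1 : -1 < z.im := hz.1
      have h2 : z.im < 0 := hz.2
      change |z.im| ≤ A
      rw [abs_le]; constructor <;> linarith
    · refine (aux_besselJ_diff hx).comp (f := fun z : ℂ => 2 * I * z)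
        (Differentiable.differentiableOn (by fun_prop)) fun z hz => ?_
      have h2 : z.im < 0 := hz.2
      change 0 < (2 * I * z).re
      rw [hre]; linarith
  have key := aux_shift (by linarith : 1 < 1 + δ) hNc hNd hNb'
  have hI : ∫ t : ℝ, (h t : ℂ) * besselJ (2 * I * t) x * ((t : ℂ) / (Real.cosh (π * t) : ℂ))
      = ∫ u : ℝ, N u / (Real.cosh (π * u) : ℂ) := by
    congr 1; ext t
    simp only [hN]
    rw [hh.extends_h]; ring
  have c1 : ‖∫ u : ℝ, N (u - I) / (Real.cosh (π * u) : ℂ)‖ ≤ 2 * D * (x / 2) ^ (2:ℝ) * J1 := by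
    have hi : Integrable (fun u : ℝ => 2 * (D * (x / 2) ^ (2:ℝ)) * (1 + ‖u‖) ^ (-(1 + δ))) :=
      (integrable_one_add_norm (by simpa using hδ)).const_mul _
    refine (norm_integral_le_of_norm_le hi (Filter.Eventually.of_forall fun u => ?_)).trans ?_
    · apply aux_quot_bound
      have := hNb (u - I) (by simp) (by simp)
      simpa using this
    · rw [integral_const_mul, hJ1]; apply le_of_eq; ring
  have c2 : ‖N (-I / 2)‖ ≤ D * (x / 2) := by
    have := hNb (-I / 2) (by simp; norm_num) (by simp; norm_num)
    have e : (-2 : ℝ) * (-I / 2 : ℂ).im = 1 := by simp; norm_num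
    have e' : (-I / 2 : ℂ).re = 0 := by simp
    rw [e, e'] at this
    simpa using this
  have c3 : (x / 2) ^ (2:ℝ) ≤ π * x := by
    rw [Real.rpow_two]; nlinarith
  rw [Hplus, hI, key, norm_mul]
  have c4 : ‖(2 * I / (π : ℂ))‖ = 2 / π := by
    simp [abs_of_pos Real.pi_pos]
  have hp := Real.pi_pos
  rw [c4, mul_assoc (2 / π)]
  apply mul_le_mul_of_nonneg_left _ (by positivity)
  refine (norm_add_le _ _).trans ?_
  rw [norm_neg, norm_mul, norm_mul, Complex.norm_two, ← hJ2]
  calc _ ≤ 2 * D * (x / 2) ^ (2:ℝ) * J1 + 2 * (D * (x / 2)) * J2 := by gcongr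
    _ ≤ 2 * D * (π * x) * J1 + 2 * (D * (x / 2)) * J2 := by gcongr
    _ = _ := by ring

/-- For `h ∈ 𝓗(A,δ)` with `A > 13`, we have `|H⁺(x)| ≤ C x` on `(0, 4π)`; in particular
`H⁺(x) → 0` as `x → 0⁺`. -/
theorem Hplus_bound_linear (A δ : ℝ) (hA : 13 < A) (hδ : 0 < δ) (h : ℝ → ℝ) (H : ℂ → ℂ)
    (hh : IsInHClass A δ h H) :
    (∃ C : ℝ, ∀ x : ℝ, 0 < x → x < 4 * π → ‖Hplus h x‖ ≤ C * x) ∧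
      Filter.Tendsto (Hplus h) (nhdsWithin 0 (Set.Ioi 0)) (nhds 0) := by
  obtain ⟨C, hC⟩ := aux_main A δ hA hδ h H hh
  refine ⟨⟨C, hC⟩, ?_⟩
  have ht : Filter.Tendsto (fun x : ℝ => C * x) (nhdsWithin 0 (Set.Ioi 0)) (nhds 0) := by
    have : Filter.Tendsto (fun x : ℝ => C * x) (nhds 0) (nhds (C * 0)) :=
      (continuous_const.mul continuous_id).tendsto 0
    rw [mul_zero] at this
    exact this.mono_left nhdsWithin_le_nhds
  apply squeeze_zero_norm' _ ht
  have hp : (0:ℝ) < 4 * π := by positivity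
  filter_upwards [Ioo_mem_nhdsGT hp] with x hx
  exact hC x hx.1 hx.2
end
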